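/- Let w be an admissible weight on G whose weak horizontal gradient ∇_H w is locally essentially bounded and which has a weak sub-Laplacian L w in L^Q_loc, where Q := 2n + 2m (i.e. there exists h ∈ L^Q_loc(G) with ∫_G w (L φ) dy = ∫_G h φ dy for every φ ∈ C_c^∞(G)). Then the weighted sub-Laplacian with domain C_c^∞(G,ℂ) ⊆ L²(G, w dy), defined by φ ↦ L φ − (∇_H w / w) · ∇_H φ, is essentially self-adjoint on L²(G, w dy): its closure is self-adjoint (equivalently, its adjoint is self-adjoint). -/

import Mathlib

/-!
Write `μ = w dy`. Integration by parts against the weak gradient of `w` turns the operator `T` into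
the Dirichlet form `⟨T φ, ψ⟩ = ∑_j ∫ w conj(X_j φ) X_j ψ` on test functions (`IsWt.form_eq`), so `T`
is symmetric and nonnegative. A densely defined operator with these properties has a self-adjoint
adjoint as soon as `ker (T* + 1) = 0` (`isSelfAdjoint_adjoint_of_ker`). As the coefficients are real,
it suffices to show that a real `u ∈ L²(μ)` with `∫ u (T φ + φ) dμ = 0` for all real test functions
`φ` vanishes (`ae_eq_zero_of_weak`).

Put `v = w u` and `F_j = g_j u`, where `g_j` are the components of the weak gradient of `w`. The
equation for `u` is the distributional identity `∑_j X_j (X_j v - F_j) = v`. If everything were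
smooth, testing it with `η² v / w` would give, with `D_j = X_j v - F_j`,
`∫ (η v)² / w = -∑_j ∫ D_j X_j (η² v / w)`. Completing the square in `D_j` bounds the right-hand side
by an integral that contains no derivative of `v`, which for `F_j = v X_j w / w` equals
`∑_j ∫ (X_j η)² v² / w` (`smooth_energy`).

This form of the estimate passes to the limit without any regularity of `u`. Group convolution
`ρ_k * f` commutes with the left-invariant fields, so mollifying `v`, `F_j`, `w` and `g_j`
separately preserves the equation and the relation between `w` and its gradient
(`moll_equation`, `XD_moll_weak`). The estimate for the mollified data involves only `v`, `F_j`, which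
converge in `L²_loc`, and factors built from `w` and `g_j`, which are locally bounded (`w` also from
below) and converge a.e. along a subsequence. In the limit
`∫ η² u² w ≤ ∑_j ∫ (X_j η)² u² w` (`weak_energy`). Dilated cut-offs have `|X_j η_N| = O(1/N)`, hence
`u = 0`.
-/

open MeasureTheory Filter
open scoped BigOperators ENNReal NNReal

noncomputable section

/-- Points of the Métivier group `G = ℝ^{2n} × ℝ^m`. -/
abbrev GrpPt (n m : ℕ) := (Fin (2*n) → ℝ) × (Fin m → ℝ)

/-- Euclidean norm on `Fin k → ℝ`. -/
def e2norm {k : ℕ} (x : Fin k → ℝ) : ℝ := Real.sqrt (∑ i, (x i)^2)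

/-- Kaplan norm `N(x,t) = (|x|^4 + 16|t|^2)^(1/4)`. -/
def kN {n m : ℕ} (p : GrpPt n m) : ℝ := (e2norm p.1 ^ 4 + 16 * e2norm p.2 ^ 2) ^ ((1:ℝ)/4)

/-- Group multiplication of the Métivier group. -/
def gmul {n m : ℕ} (J : Fin m → Matrix (Fin (2*n)) (Fin (2*n)) ℝ) (p q : GrpPt n m) : GrpPt n m :=
  (p.1 + q.1, p.2 + q.2 + fun k => (1/2 : ℝ) * ∑ i, (J k).mulVec p.1 i * q.1 i)

/-- Horizontal left-invariant vector field `X_j`. -/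
def XD {n m : ℕ} (J : Fin m → Matrix (Fin (2*n)) (Fin (2*n)) ℝ)
    {E : Type*} [NormedAddCommGroup E] [NormedSpace ℝ E]
    (j : Fin (2*n)) (f : GrpPt n m → E) (p : GrpPt n m) : E :=
  fderiv ℝ f p (Pi.single j 1, 0)
    + (1/2 : ℝ) • ∑ k, ((J k).mulVec p.1 j) • fderiv ℝ f p (0, Pi.single k 1)

/-- Squared length of the horizontal gradient. -/
def gradSq {n m : ℕ} (J : Fin m → Matrix (Fin (2*n)) (Fin (2*n)) ℝ)
    (f : GrpPt n m → ℝ) (p : GrpPt n m) : ℝ := ∑ j, (XD J j f p)^2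

/-- Sub-Laplacian `L f = -∑ X_j (X_j f)`. -/
def LSub {n m : ℕ} (J : Fin m → Matrix (Fin (2*n)) (Fin (2*n)) ℝ)
    {E : Type*} [NormedAddCommGroup E] [NormedSpace ℝ E]
    (f : GrpPt n m → E) (p : GrpPt n m) : E := - ∑ j, XD J j (XD J j f) p

/-- Weight `w_α = exp (-N^α)`. -/
def wA {n m : ℕ} (α : ℝ) (p : GrpPt n m) : ℝ := Real.exp (-(kN p ^ α))

/-- Potential `V_α = -(1/4) |grad w_α|²/w_α² - (1/2) (L w_α)/w_α`. -/
def VA {n m : ℕ} (J : Fin m → Matrix (Fin (2*n)) (Fin (2*n)) ℝ) (α : ℝ) (p : GrpPt n m) : ℝ :=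
  -(1/4) * gradSq J (wA α) p / (wA α p)^2 - (1/2) * LSub J (wA α) p / wA α p

/-- The weighted measure `w(y) dy`. -/
def wMeasure {n m : ℕ} (w : GrpPt n m → ℝ) : Measure (GrpPt n m) :=
  (volume : Measure (GrpPt n m)).withDensity (fun y => ENNReal.ofReal (w y))

/-! ### A criterion for self-adjointness of the adjoint -/

/-- A densely defined, symmetric, nonnegative `T` with `ker (T* + 1) = 0` has a self-adjoint
adjoint. The range of `T + 1` is dense, and `‖x‖ ≤ ‖T x + x‖` on the domain, so every `x` in the
domain of `T*` is a graph-norm limit of elements of the domain of `T`; hence `T*` is symmetric. -/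
theorem isSelfAdjoint_adjoint_of_ker {H : Type*} [NormedAddCommGroup H] [InnerProductSpace ℂ H]
    [CompleteSpace H] (T : H →ₗ.[ℂ] H) (hd : Dense (T.domain : Set H))
    (hsymm : ∀ x y : T.domain, inner ℂ (T x) (y : H) = inner ℂ (x : H) (T y))
    (hpos : ∀ x : T.domain, 0 ≤ (inner ℂ (T x) (x : H)).re)
    (hker : ∀ u : H, (∀ x : T.domain, inner ℂ u (T x + x) = 0) → u = 0) :
    IsSelfAdjoint T.adjoint := by
  have hformal : T.IsFormalAdjoint T := fun x y => hsymm x y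
  have hle : T ≤ T.adjoint := hformal.le_adjoint hd
  have hadj := T.adjoint_isFormalAdjoint hd
  have hd' : Dense (T.adjoint.domain : Set H) := hd.mono hle.1
  -- the range of `T + 1` is dense
  let S : Submodule ℂ H := LinearMap.range (T.toFun + T.domain.subtype)
  have hS : Dense (S : Set H) := by
    rw [Submodule.dense_iff_topologicalClosure_eq_top, Submodule.topologicalClosure_eq_top_iff,
      Submodule.eq_bot_iff]
    intro u hu
    refine hker u fun x => ?_
    have := (Submodule.mem_orthogonal' S u).1 hu (T x + x) ⟨x, rfl⟩
    exact this
  have hbound : ∀ x : T.domain, ‖(x : H)‖ ≤ ‖T x + x‖ := by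
    intro x
    have h1 : ‖(x : H)‖ ^ 2 ≤ (inner ℂ (T x + x) (x : H)).re := by
      rw [inner_add_left, Complex.add_re, inner_self_eq_norm_sq_to_K]
      have := hpos x
      have h0 : (((‖(x : H)‖ : ℂ) ^ 2)).re = ‖(x : H)‖ ^ 2 := by norm_cast
      have h0' := h0.symm
      simp only [Complex.coe_algebraMap]
      linarith
    have h2 : (inner ℂ (T x + x) (x : H)).re ≤ ‖T x + x‖ * ‖(x : H)‖ :=
      (Complex.re_le_norm _).trans (norm_inner_le_norm _ _)
    by_contra! h
    have h3 : 0 ≤ ‖T x + x‖ := norm_nonneg _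
    nlinarith
  have key : ∀ (x y : T.adjoint.domain), inner ℂ (T.adjoint x) (y : H) = inner ℂ (x : H) (T.adjoint y) := by
    intro y x
    -- approximate `x` in the graph norm by elements of the domain of `T`
    obtain ⟨s, hs, hlim⟩ := mem_closure_iff_seq_limit.1 (hS (T.adjoint x + (x : H)))
    choose φ hφ using hs
    have hφ' : ∀ k, T (φ k) + (φ k : H) = s k := hφ
    have hc : CauchySeq (fun k => (φ k : H)) := by
      have hsc := hlim.cauchySeq
      rw [Metric.cauchySeq_iff] at hsc ⊢
      intro ε hε
      obtain ⟨N, hN⟩ := hsc ε hε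
      refine ⟨N, fun a ha b hb => lt_of_le_of_lt ?_ (hN a ha b hb)⟩
      rw [dist_eq_norm, dist_eq_norm, ← hφ' a, ← hφ' b]
      have := hbound (φ a - φ b)
      rw [LinearPMap.map_sub] at this
      refine this.trans (le_of_eq ?_)
      congr 1
      push_cast
      abel
    obtain ⟨z, hz⟩ := cauchySeq_tendsto_of_complete hc
    have hTz : Tendsto (fun k => T (φ k)) atTop (nhds (T.adjoint x + (x : H) - z)) := by
      refine (hlim.sub hz).congr fun k => ?_
      rw [← hφ' k]; abel
    have hyz : ∀ y : T.adjoint.domain,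
        inner ℂ (T.adjoint y) z = inner ℂ (y : H) (T.adjoint x + (x : H) - z) := by
      intro y
      have h1 := (tendsto_const_nhds (x := T.adjoint y)).inner (𝕜 := ℂ) hz
      have h2 := (tendsto_const_nhds (x := (y : H))).inner (𝕜 := ℂ) hTz
      refine tendsto_nhds_unique h1 (h2.congr fun k => ?_)
      exact (hadj y (φ k)).symm
    have hzx : (x : H) = z := by
      rw [← sub_eq_zero]
      refine hker _ fun ψ => ?_
      have h1 := hyz ⟨ψ, hle.1 ψ.2⟩
      have h2 : T.adjoint ⟨ψ, hle.1 ψ.2⟩ = T ψ := (hle.2 rfl).symm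
      rw [h2] at h1
      have h3 := hadj x ψ
      have h1' := congrArg (starRingEnd ℂ) h1
      rw [inner_conj_symm, inner_conj_symm] at h1'
      rw [inner_sub_left, inner_add_right, inner_add_right, ← h3, h1', inner_sub_left, inner_add_left]
      ring
    have h4 := hyz y
    rw [← hzx, add_sub_cancel_right] at h4
    exact h4
  have hle2 : T.adjoint ≤ T.adjoint.adjoint :=
    LinearPMap.IsFormalAdjoint.le_adjoint hd' (fun x y => key x y)
  have hadj2 := T.adjoint.adjoint_isFormalAdjoint hd'
  have hle1 : T.adjoint.adjoint ≤ T.adjoint := by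
    refine LinearPMap.IsFormalAdjoint.le_adjoint hd ?_
    intro x y
    have h2 : T.adjoint ⟨x, hle.1 x.2⟩ = T x := (hle.2 rfl).symm
    have h3 := hadj2.symm ⟨x, hle.1 x.2⟩ y
    rw [h2] at h3
    exact h3
  exact le_antisymm hle1 hle2

/-! ### Horizontal vector fields -/

instance isAddHaarMeasure_volume_grpPt (n m : ℕ) :
    (volume : Measure (GrpPt n m)).IsAddHaarMeasure :=
  Measure.prod.instIsAddHaarMeasure (volume : Measure (Fin (2*n) → ℝ))
    (volume : Measure (Fin m → ℝ))

/-- The horizontal vector field `X_j` at `p`, as a tangent vector. -/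
def Xvec {n m : ℕ} (J : Fin m → Matrix (Fin (2*n)) (Fin (2*n)) ℝ) (j : Fin (2*n))
    (p : GrpPt n m) : GrpPt n m :=
  (Pi.single j 1, fun k => (1/2 : ℝ) * (J k).mulVec p.1 j)

theorem XD_eq {n m : ℕ} (J : Fin m → Matrix (Fin (2*n)) (Fin (2*n)) ℝ)
    {E : Type*} [NormedAddCommGroup E] [NormedSpace ℝ E]
    (j : Fin (2*n)) (f : GrpPt n m → E) (p : GrpPt n m) :
    XD J j f p = fderiv ℝ f p (Xvec J j p) := by
  have h : Xvec J j p = ((Pi.single j 1, 0) : GrpPt n m)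
      + (1/2 : ℝ) • ∑ k, ((J k).mulVec p.1 j) • ((0, Pi.single k 1) : GrpPt n m) := by
    ext i
    · simp [Xvec, Prod.fst_sum]
    · simp [Xvec, Prod.snd_sum, Finset.sum_apply, Pi.single_apply]
  rw [h, map_add, map_smul, map_sum]
  simp only [map_smul]
  rfl

theorem contDiff_mulVec {n m : ℕ} (J : Fin m → Matrix (Fin (2*n)) (Fin (2*n)) ℝ) (k : Fin m)
    (j : Fin (2*n)) : ContDiff ℝ (⊤ : ℕ∞) (fun x : Fin (2*n) → ℝ => (J k).mulVec x j) := by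
  simp only [Matrix.mulVec, dotProduct]
  fun_prop

theorem contDiff_Xvec {n m : ℕ} (J : Fin m → Matrix (Fin (2*n)) (Fin (2*n)) ℝ) (j : Fin (2*n)) :
    ContDiff ℝ (⊤ : ℕ∞) (Xvec (n := n) (m := m) J j) := by
  unfold Xvec
  refine contDiff_const.prodMk (contDiff_pi.2 fun k => ?_)
  exact contDiff_const.mul ((contDiff_mulVec J k j).comp contDiff_fst)

theorem contDiff_XD {n m : ℕ} (J : Fin m → Matrix (Fin (2*n)) (Fin (2*n)) ℝ)
    {E : Type*} [NormedAddCommGroup E] [NormedSpace ℝ E]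
    (j : Fin (2*n)) {f : GrpPt n m → E} (hf : ContDiff ℝ (⊤ : ℕ∞) f) :
    ContDiff ℝ (⊤ : ℕ∞) (XD J j f) := by
  have : XD J j f = fun p => fderiv ℝ f p (Xvec J j p) := funext fun p => XD_eq J j f p
  rw [this]
  exact (hf.fderiv_right (m := (⊤ : ℕ∞)) (by simp)).clm_apply (contDiff_Xvec J j)

theorem tsupport_XD_subset {n m : ℕ} (J : Fin m → Matrix (Fin (2*n)) (Fin (2*n)) ℝ)
    {E : Type*} [NormedAddCommGroup E] [NormedSpace ℝ E]
    (j : Fin (2*n)) (f : GrpPt n m → E) : Function.support (XD J j f) ⊆ tsupport f := by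
  intro p hp
  by_contra h
  refine hp ?_
  have := notMem_tsupport_iff_eventuallyEq.1 h
  rw [XD_eq, this.fderiv_eq]
  simp

theorem hasCompactSupport_XD {n m : ℕ} (J : Fin m → Matrix (Fin (2*n)) (Fin (2*n)) ℝ)
    {E : Type*} [NormedAddCommGroup E] [NormedSpace ℝ E]
    (j : Fin (2*n)) {f : GrpPt n m → E} (hf : HasCompactSupport f) :
    HasCompactSupport (XD J j f) :=
  hf.mono' (tsupport_XD_subset J j f)

theorem XD_mul {n m : ℕ} (J : Fin m → Matrix (Fin (2*n)) (Fin (2*n)) ℝ)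
    {𝕜 : Type*} [RCLike 𝕜]
    (j : Fin (2*n)) {f g : GrpPt n m → 𝕜} {p : GrpPt n m} (hf : DifferentiableAt ℝ f p)
    (hg : DifferentiableAt ℝ g p) :
    XD J j (fun q => f q * g q) p = f p * XD J j g p + XD J j f p * g p := by
  simp only [XD_eq]
  rw [fderiv_fun_mul hf hg]
  simp [mul_comm]

theorem XD_clm {n m : ℕ} (J : Fin m → Matrix (Fin (2*n)) (Fin (2*n)) ℝ)
    {E F : Type*} [NormedAddCommGroup E] [NormedSpace ℝ E] [NormedAddCommGroup F] [NormedSpace ℝ F]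
    (j : Fin (2*n)) {f : GrpPt n m → E} (L : E →L[ℝ] F) {p : GrpPt n m}
    (hf : DifferentiableAt ℝ f p) :
    XD J j (fun q => L (f q)) p = L (XD J j f p) := by
  simp only [XD_eq]
  have := L.hasFDerivAt.comp p hf.hasFDerivAt
  rw [show (fun q => L (f q)) = L ∘ f from rfl, this.fderiv]
  rfl

theorem integral_fderiv_apply_eq_zero {V : Type*} [NormedAddCommGroup V] [NormedSpace ℝ V]
    [FiniteDimensional ℝ V] [MeasurableSpace V] [BorelSpace V] (μ : Measure V) [μ.IsAddHaarMeasure]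
    {f : V → ℝ} (hf : ContDiff ℝ 1 f) (hc : HasCompactSupport f) (v : V) :
    ∫ p, fderiv ℝ f p v ∂μ = 0 := by
  have hd : Continuous fun p => fderiv ℝ f p v :=
    (hf.continuous_fderiv one_ne_zero).clm_apply continuous_const
  have hdc : HasCompactSupport fun p => fderiv ℝ f p v := hc.fderiv_apply (𝕜 := ℝ) v
  have := integral_mul_fderiv_eq_neg_fderiv_mul_of_integrable (μ := μ) (𝕜 := ℝ)
    (f := fun _ : V => (1 : ℝ)) (g := f) (v := v) (by simp) (by simpa using hd.integrable_of_hasCompactSupport hdc)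
    (by simpa using hf.continuous.integrable_of_hasCompactSupport hc)
    (fun _ _ => differentiableAt_const _) (fun x _ => hf.differentiable one_ne_zero x)
  simpa using this

/-- The fields `X_j` are divergence-free. -/
theorem integral_XD_eq_zero {n m : ℕ} (J : Fin m → Matrix (Fin (2*n)) (Fin (2*n)) ℝ)
    (j : Fin (2*n)) {f : GrpPt n m → ℝ} (hf : ContDiff ℝ (⊤ : ℕ∞) f) (hc : HasCompactSupport f) :
    ∫ p, XD J j f p = 0 := by
  have hf1 : ContDiff ℝ 1 f := hf.of_le (by exact_mod_cast le_top)
  -- the coefficient of `∂_{t_k}` does not depend on `t`, so it can be moved under the derivative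
  have h2 : ∀ k : Fin m, ∀ p : GrpPt n m,
      ((J k).mulVec p.1 j) • fderiv ℝ f p (0, Pi.single k 1)
        = fderiv ℝ (fun q : GrpPt n m => (J k).mulVec q.1 j * f q) p (0, Pi.single k 1) := by
    intro k p
    have hc1 : ContDiff ℝ 1 (fun q : GrpPt n m => (J k).mulVec q.1 j) :=
      ((contDiff_mulVec J k j).comp contDiff_fst).of_le (by exact_mod_cast le_top)
    have hA : fderiv ℝ (fun q : GrpPt n m => (J k).mulVec q.1 j) p (0, Pi.single k 1) = 0 := by
      have h0 : HasFDerivAt (fun x : Fin (2*n) → ℝ => (J k).mulVec x j)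
        (fderiv ℝ (fun x : Fin (2*n) → ℝ => (J k).mulVec x j) p.1) p.1 :=
        ((contDiff_mulVec J k j).differentiable (by simp) _).hasFDerivAt
      have h1 := h0.comp p (hasFDerivAt_fst (𝕜 := ℝ) (p := p))
      have h2 : fderiv ℝ (fun q : GrpPt n m => (J k).mulVec q.1 j) p = _ := h1.fderiv
      rw [h2]
      simp
    rw [fderiv_fun_mul (hc1.differentiable one_ne_zero p) (hf1.differentiable one_ne_zero p)]
    simp [hA]
  have hcd : ∀ k : Fin m, ContDiff ℝ 1 (fun q : GrpPt n m => (J k).mulVec q.1 j * f q) := fun k =>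
    (((contDiff_mulVec J k j).comp contDiff_fst).of_le (by exact_mod_cast le_top)).mul hf1
  have hcc : ∀ k : Fin m, HasCompactSupport (fun q : GrpPt n m => (J k).mulVec q.1 j * f q) :=
    fun k => hc.mul_left
  have hint : ∀ (F : GrpPt n m → ℝ) (v : GrpPt n m), ContDiff ℝ 1 F → HasCompactSupport F →
      Integrable (fun p => fderiv ℝ F p v) := fun F v hF hFc =>
    ((hF.continuous_fderiv one_ne_zero).clm_apply continuous_const).integrable_of_hasCompactSupport
      (hFc.fderiv_apply (𝕜 := ℝ) v)
  unfold XD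
  simp only [h2]
  have hs : Integrable (fun p => (1/2 : ℝ) • ∑ k : Fin m,
      fderiv ℝ (fun q : GrpPt n m => (J k).mulVec q.1 j * f q) p (0, Pi.single k 1)) :=
    (integrable_finsetSum _ fun k _ => hint _ _ (hcd k) (hcc k)).const_mul (1/2 : ℝ)
  rw [integral_add (hint f _ hf1 hc) hs, integral_smul, integral_finsetSum _ fun k _ => hint _ _ (hcd k) (hcc k)]
  rw [integral_fderiv_apply_eq_zero _ hf1 hc]
  simp [fun k => integral_fderiv_apply_eq_zero (volume : Measure (GrpPt n m)) (hcd k) (hcc k)]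

/-! ### Differentiation of kernel integrals -/

/-- Smooth kernels on `G × G` such that, for first variables in a compact set, the second variable
stays in a compact set on the support. -/
structure IsKer {n m : ℕ} (K : GrpPt n m → GrpPt n m → ℝ) : Prop where
  smooth : ContDiff ℝ (⊤ : ℕ∞) (fun q : GrpPt n m × GrpPt n m => K q.1 q.2)
  supp : ∀ R : Set (GrpPt n m), IsCompact R → ∃ C : Set (GrpPt n m), IsCompact C ∧
    ∀ x ∈ R, ∀ z, z ∉ C → K x z = 0

namespace IsKer
variable {n m : ℕ} {K : GrpPt n m → GrpPt n m → ℝ}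

theorem fderiv_left (hK : IsKer K) (x z : GrpPt n m) :
    HasFDerivAt (fun x => K x z) ((fderiv ℝ (fun q : GrpPt n m × GrpPt n m => K q.1 q.2) (x, z)).comp
      (ContinuousLinearMap.inl ℝ _ _)) x := by
  have h1 := (hK.smooth.differentiable (by simp) (x, z)).hasFDerivAt
  exact HasFDerivAt.comp (g := fun q : GrpPt n m × GrpPt n m => K q.1 q.2) x h1
    (hasFDerivAt_prodMk_left (𝕜 := ℝ) x z)

theorem fderiv_right (hK : IsKer K) (x z : GrpPt n m) :
    HasFDerivAt (fun z => K x z) ((fderiv ℝ (fun q : GrpPt n m × GrpPt n m => K q.1 q.2) (x, z)).comp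
      (ContinuousLinearMap.inr ℝ _ _)) z := by
  have h1 := (hK.smooth.differentiable (by simp) (x, z)).hasFDerivAt
  exact h1.comp z (hasFDerivAt_prodMk_right x z)

theorem contDiff_right (hK : IsKer K) (x : GrpPt n m) : ContDiff ℝ (⊤ : ℕ∞) (K x) :=
  hK.smooth.comp (contDiff_const.prodMk contDiff_id)

theorem hasCompactSupport_right (hK : IsKer K) (x : GrpPt n m) : HasCompactSupport (K x) := by
  obtain ⟨C, hC, h⟩ := hK.supp {x} isCompact_singleton
  exact HasCompactSupport.intro hC fun z hz => h x rfl z hz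

theorem XD_left (hK : IsKer K) (J : Fin m → Matrix (Fin (2*n)) (Fin (2*n)) ℝ) (j : Fin (2*n)) :
    IsKer (fun x z => XD J j (fun x => K x z) x) := by
  have h : ∀ x z, XD J j (fun x => K x z) x =
      fderiv ℝ (fun q : GrpPt n m × GrpPt n m => K q.1 q.2) (x, z) (Xvec J j x, 0) := by
    intro x z
    rw [XD_eq, (hK.fderiv_left x z).fderiv]
    simp
  refine ⟨?_, ?_⟩
  · simp only [h]
    refine (hK.smooth.fderiv_right (m := (⊤ : ℕ∞)) (by simp)).clm_apply ?_
    exact ((contDiff_Xvec J j).comp contDiff_fst).prodMk contDiff_const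
  · intro R hR
    obtain ⟨R', hR', hRR⟩ := exists_compact_superset hR
    obtain ⟨C, hC, hz⟩ := hK.supp R' hR'
    refine ⟨C, hC, fun x hx z hzC => ?_⟩
    have : (fun x => K x z) =ᶠ[nhds x] fun _ => 0 := by
      filter_upwards [mem_interior_iff_mem_nhds.1 (hRR hx)] with y hy using hz y hy z hzC
    rw [XD_eq, this.fderiv_eq]
    simp

theorem integrable_mul (hK : IsKer K) {f : GrpPt n m → ℝ} (hf : LocallyIntegrable f) (x : GrpPt n m) :
    Integrable (fun z => f z * K x z) := by
  have := hf.integrable_smul_right_of_hasCompactSupport (hK.contDiff_right x).continuous (hK.hasCompactSupport_right x)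
  exact this

theorem hasFDerivAt_integral (hK : IsKer K) {f : GrpPt n m → ℝ} (hf : LocallyIntegrable f)
    (x₀ : GrpPt n m) :
    HasFDerivAt (fun x => ∫ z, f z * K x z) (∫ z, f z • fderiv ℝ (fun x => K x z) x₀) x₀ := by
  obtain ⟨C, hC, hz⟩ := hK.supp (Metric.closedBall x₀ 1) (isCompact_closedBall _ _)
  have hcont : Continuous fun q : GrpPt n m × GrpPt n m => fderiv ℝ (fun x => K x q.2) q.1 := by
    have : (fun q : GrpPt n m × GrpPt n m => fderiv ℝ (fun x => K x q.2) q.1) = fun q =>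
      (fderiv ℝ (fun q : GrpPt n m × GrpPt n m => K q.1 q.2) q).comp
      (ContinuousLinearMap.inl ℝ _ _) := funext fun q => (hK.fderiv_left q.1 q.2).fderiv
    rw [this]
    exact (hK.smooth.continuous_fderiv (by simp)).clm_comp continuous_const
  obtain ⟨M, hM⟩ := ((isCompact_closedBall x₀ 1).prod hC).exists_bound_of_continuousOn hcont.continuousOn
  have hfm : AEStronglyMeasurable f volume := hf.aestronglyMeasurable
  have hKc : ∀ x, Continuous (K x) := fun x => (hK.contDiff_right x).continuous
  refine hasFDerivAt_integral_of_dominated_of_fderiv_le (s := Metric.ball x₀ 1) (𝕜 := ℝ)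
    (F' := fun x z => f z • fderiv ℝ (fun x => K x z) x)
    (bound := C.indicator fun z => |f z| * M) (Metric.ball_mem_nhds _ one_pos) ?_ ?_ ?_ ?_ ?_ ?_
  · exact Eventually.of_forall fun x => hfm.mul (hKc x).aestronglyMeasurable
  · exact hK.integrable_mul hf x₀
  · exact hfm.smul (hcont.comp (continuous_const.prodMk continuous_id)).aestronglyMeasurable
  · refine Eventually.of_forall fun z x hx => ?_
    by_cases hzC : z ∈ C
    · rw [Set.indicator_of_mem hzC, norm_smul, Real.norm_eq_abs]
      exact mul_le_mul_of_nonneg_left (hM (x, z) ⟨Metric.ball_subset_closedBall hx, hzC⟩) (abs_nonneg _)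
    · rw [Set.indicator_of_notMem hzC]
      have : (fun x => K x z) =ᶠ[nhds x] fun _ => 0 := by
        filter_upwards [Metric.isOpen_ball.mem_nhds hx] with y hy using
          hz y (Metric.ball_subset_closedBall hy) z hzC
      rw [this.fderiv_eq]
      simp
  · rw [integrable_indicator_iff hC.measurableSet]
    exact (hf.integrableOn_isCompact hC).abs.mul_const M
  · refine Eventually.of_forall fun z x _ => ?_
    have := (hK.fderiv_left x z)
    rw [← this.fderiv] at this
    exact this.const_mul (f z)

/-- Smoothness of `x ↦ ∫ f K(x, ·)`, seen as a convolution with parameter `x`, evaluated at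
`0`. -/
theorem contDiff_integral (hK : IsKer K) {f : GrpPt n m → ℝ} (hf : LocallyIntegrable f) :
    ContDiff ℝ (⊤ : ℕ∞) (fun x => ∫ z, f z * K x z) := by
  rw [contDiff_iff_contDiffAt]
  intro x₀
  obtain ⟨C, hC, hz⟩ := hK.supp (Metric.closedBall x₀ 1) (isCompact_closedBall _ _)
  have := contDiffOn_convolution_right_with_param_comp (𝕜 := ℝ) (n := (⊤ : ℕ∞)) (μ := (volume : Measure (GrpPt n m)))
    (ContinuousLinearMap.mul ℝ ℝ)
    (s := Metric.ball x₀ 1) (v := fun _ => (0 : GrpPt n m)) contDiffOn_const (f := f)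
    (g := fun x z => K x (-z)) (k := -C) Metric.isOpen_ball hC.neg
    (fun p x hp hx => hz p (Metric.ball_subset_closedBall hp) _ (by simpa using hx)) hf
    ((hK.smooth.comp (contDiff_fst.prodMk contDiff_snd.neg)).contDiffOn)
  have h2 := this.contDiffAt (Metric.isOpen_ball.mem_nhds (Metric.mem_ball_self one_pos))
  refine h2.congr_of_eventuallyEq (Eventually.of_forall fun x => ?_)
  simp [convolution]

/-- Differentiation under the integral sign. -/
theorem XD_integral (hK : IsKer K) {f : GrpPt n m → ℝ} (hf : LocallyIntegrable f)
    (J : Fin m → Matrix (Fin (2*n)) (Fin (2*n)) ℝ) (j : Fin (2*n)) (x : GrpPt n m) :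
    XD J j (fun x => ∫ z, f z * K x z) x = ∫ z, f z * XD J j (fun x => K x z) x := by
  rw [XD_eq, (hK.hasFDerivAt_integral hf x).fderiv, ContinuousLinearMap.integral_apply]
  · simp [XD_eq]
  · -- the kernel of all first partial derivatives is continuous with compact support
    have hcont : Continuous fun z : GrpPt n m => fderiv ℝ (fun x => K x z) x := by
      have : (fun z : GrpPt n m => fderiv ℝ (fun x => K x z) x) = fun z =>
        (fderiv ℝ (fun q : GrpPt n m × GrpPt n m => K q.1 q.2) (x, z)).comp
        (ContinuousLinearMap.inl ℝ _ _) := funext fun q => (hK.fderiv_left x q).fderiv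
      rw [this]
      exact ((hK.smooth.continuous_fderiv (by simp)).comp
        (continuous_const.prodMk continuous_id)).clm_comp continuous_const
    obtain ⟨C, hC, hz⟩ := hK.supp (Metric.closedBall x 1) (isCompact_closedBall _ _)
    refine hf.integrable_smul_right_of_hasCompactSupport hcont (HasCompactSupport.intro hC fun z hzC => ?_)
    have : (fun x => K x z) =ᶠ[nhds x] fun _ => 0 := by
      filter_upwards [Metric.closedBall_mem_nhds x one_pos] with y hy using hz y hy z hzC
    rw [this.fderiv_eq]
    simp

/-- A horizontal derivative in the first variable commutes with one in the second. -/
theorem XD_comm (hK : IsKer K) (J : Fin m → Matrix (Fin (2*n)) (Fin (2*n)) ℝ) (i j : Fin (2*n))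
    (x z : GrpPt n m) :
    XD J i (fun z => XD J j (fun x => K x z) x) z = XD J j (fun x => XD J i (fun z => K x z) z) x := by
  set F : GrpPt n m × GrpPt n m → ℝ := fun q => K q.1 q.2 with hF
  have hl : (fun z => XD J j (fun x => K x z) x) = fun z => fderiv ℝ F (x, z) (Xvec J j x, 0) := by
    ext z
    rw [XD_eq, (hK.fderiv_left x z).fderiv]
    simp [hF]
  have hr : (fun x => XD J i (fun z => K x z) z) = fun x => fderiv ℝ F (x, z) (0, Xvec J i z) := by
    ext x
    rw [XD_eq, (hK.fderiv_right x z).fderiv]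
    simp [hF]
  have hd : HasFDerivAt (fderiv ℝ F) (fderiv ℝ (fderiv ℝ F) (x, z)) (x, z) :=
    ((hK.smooth.fderiv_right (m := (⊤ : ℕ∞)) (by simp)).differentiable (by simp) _).hasFDerivAt
  rw [hl, hr, XD_eq, XD_eq]
  have h1 := (hd.comp z (hasFDerivAt_prodMk_right x z)).clm_apply
    (hasFDerivAt_const ((Xvec J j x, 0) : GrpPt n m × GrpPt n m) z)
  have h2 := (HasFDerivAt.comp (g := fderiv ℝ F) x hd
    (hasFDerivAt_prodMk_left (𝕜 := ℝ) x z)).clm_apply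
    (hasFDerivAt_const ((0, Xvec J i z) : GrpPt n m × GrpPt n m) x)
  have h1' := h1.fderiv
  have h2' := h2.fderiv
  simp only [Function.comp_def] at h1' h2'
  rw [h1', h2']
  have hsym : IsSymmSndFDerivAt ℝ F (x, z) := hK.smooth.contDiffAt.isSymmSndFDerivAt (by
    simp only [minSmoothness_of_isRCLikeNormedField]
    exact WithTop.coe_le_coe.2 le_top)
  simpa using hsym (0, Xvec J i z) (Xvec J j x, 0)
end IsKer

/-! ### The group law and mollification -/

/-- The central part `½ (⟨J_k a, b⟩)_k` of the group law. -/
def BB {n m : ℕ} (J : Fin m → Matrix (Fin (2*n)) (Fin (2*n)) ℝ) (a b : Fin (2*n) → ℝ) :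
    Fin m → ℝ := fun k => (1/2 : ℝ) * ((J k).mulVec a ⬝ᵥ b)

/-- The group quotient `x · z⁻¹`. -/
def PP {n m : ℕ} (J : Fin m → Matrix (Fin (2*n)) (Fin (2*n)) ℝ) (x z : GrpPt n m) : GrpPt n m :=
  (x.1 - z.1, x.2 - BB J (x.1 - z.1) z.1 - z.2)

/-- The left translate `y⁻¹ · x`. -/
def QQ {n m : ℕ} (J : Fin m → Matrix (Fin (2*n)) (Fin (2*n)) ℝ) (x y : GrpPt n m) : GrpPt n m :=
  (x.1 - y.1, x.2 - BB J y.1 (x.1 - y.1) - y.2)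

section group
variable {n m : ℕ} (J : Fin m → Matrix (Fin (2*n)) (Fin (2*n)) ℝ)

theorem QQ_PP (x z : GrpPt n m) : QQ J x (PP J x z) = z := by
  ext i <;> simp [QQ, PP]

theorem PP_QQ (x y : GrpPt n m) : PP J x (QQ J x y) = y := by
  ext i <;> simp [QQ, PP]

theorem QQ_zero (x : GrpPt n m) : QQ J x 0 = x := by
  ext i <;> simp [QQ, BB]

theorem contDiff_BB : ContDiff ℝ (⊤ : ℕ∞)
    (fun q : (Fin (2*n) → ℝ) × (Fin (2*n) → ℝ) => BB J q.1 q.2) := by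
  refine contDiff_pi.2 fun k => ?_
  simp only [BB, Matrix.mulVec, dotProduct]
  fun_prop

theorem contDiff_PP : ContDiff ℝ (⊤ : ℕ∞) (fun q : GrpPt n m × GrpPt n m => PP J q.1 q.2) := by
  unfold PP
  have h1 : ContDiff ℝ (⊤ : ℕ∞) (fun q : GrpPt n m × GrpPt n m => BB J (q.1.1 - q.2.1) q.2.1) :=
    (contDiff_BB J).comp (f := fun q : GrpPt n m × GrpPt n m => (q.1.1 - q.2.1, q.2.1)) (by fun_prop)
  fun_prop

theorem contDiff_QQ : ContDiff ℝ (⊤ : ℕ∞) (fun q : GrpPt n m × GrpPt n m => QQ J q.1 q.2) := by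
  unfold QQ
  have h1 : ContDiff ℝ (⊤ : ℕ∞) (fun q : GrpPt n m × GrpPt n m => BB J q.2.1 (q.1.1 - q.2.1)) :=
    (contDiff_BB J).comp (f := fun q : GrpPt n m × GrpPt n m => (q.2.1, q.1.1 - q.2.1)) (by fun_prop)
  fun_prop

/-- The flow of `X_j` consists of right translations, which leave `x · z⁻¹` invariant. -/
theorem PP_flow (j : Fin (2*n)) (x z : GrpPt n m) (s : ℝ) :
    PP J (x + s • Xvec J j x) (z + s • Xvec J j z) = PP J x z := by
  have e : ∀ a b c : Fin (2*n) → ℝ, a + c - (b + c) = a - b := fun a b c => by abel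
  ext i
  · simp [PP, Xvec]
  · simp [PP, Xvec, BB, e, dotProduct_add, Matrix.mulVec_sub, sub_dotProduct]
    ring

theorem measurePreserving_PP (x : GrpPt n m) : MeasurePreserving (PP J x) := by
  refine MeasurePreserving.skew_product (f := fun a : Fin (2*n) → ℝ => x.1 - a)
    (g := fun a c => x.2 - BB J (x.1 - a) a - c) (Measure.measurePreserving_sub_left _ _) ?_ ?_
  · have h1 : Continuous (fun q : (Fin (2*n) → ℝ) × (Fin m → ℝ) => BB J (x.1 - q.1) q.1) :=
      (contDiff_BB J).continuous.comp (f := fun q : GrpPt n m => (x.1 - q.1, q.1)) (by fun_prop)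
    have : Continuous (fun q : (Fin (2*n) → ℝ) × (Fin m → ℝ) => x.2 - BB J (x.1 - q.1) q.1 - q.2) := by
      fun_prop
    exact this.measurable
  · exact Eventually.of_forall fun a => (Measure.measurePreserving_sub_left _ _).map_eq

theorem measurePreserving_QQ (y : GrpPt n m) : MeasurePreserving (fun x => QQ J x y) := by
  refine MeasurePreserving.skew_product (f := fun a : Fin (2*n) → ℝ => a - y.1)
    (g := fun a c => c - BB J y.1 (a - y.1) - y.2) (measurePreserving_sub_right _ _) ?_ ?_
  · have h1 : Continuous (fun q : (Fin (2*n) → ℝ) × (Fin m → ℝ) => BB J y.1 (q.1 - y.1)) :=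
      (contDiff_BB J).continuous.comp (f := fun q : GrpPt n m => (y.1, q.1 - y.1)) (by fun_prop)
    have : Continuous (fun q : (Fin (2*n) → ℝ) × (Fin m → ℝ) => q.2 - BB J y.1 (q.1 - y.1) - y.2) := by
      fun_prop
    exact this.measurable
  · refine Eventually.of_forall fun a => ?_
    simp only [sub_sub]
    exact (measurePreserving_sub_right _ _).map_eq

/-- `z ↦ x · z⁻¹` as a measurable equivalence. -/
def PPequiv (x : GrpPt n m) : GrpPt n m ≃ᵐ GrpPt n m where
  toFun := PP J x
  invFun := QQ J x
  left_inv := QQ_PP J x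
  right_inv := PP_QQ J x
  measurable_toFun := ((contDiff_PP J).continuous.comp (Continuous.prodMk_right x)).measurable
  measurable_invFun := ((contDiff_QQ J).continuous.comp (Continuous.prodMk_right x)).measurable
end group

/-- Bump functions shrinking to the identity of the group. -/
def bmp (n m k : ℕ) : ContDiffBump (0 : GrpPt n m) where
  rIn := 1 / ((k : ℝ) + 2)
  rOut := 1 / ((k : ℝ) + 1)
  rIn_pos := by positivity
  rIn_lt_rOut := by
    apply one_div_lt_one_div_of_lt <;> [positivity; linarith]

/-- The mollifier: a normalized bump function of radius `1 / (k + 1)`. -/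
def rho (n m k : ℕ) : GrpPt n m → ℝ := (bmp n m k).normed volume

theorem contDiff_rho (n m k : ℕ) : ContDiff ℝ (⊤ : ℕ∞) (rho n m k) := ContDiffBump.contDiff_normed _

theorem rho_nonneg (n m k : ℕ) (y : GrpPt n m) : 0 ≤ rho n m k y := ContDiffBump.nonneg_normed _ _

theorem integral_rho (n m k : ℕ) : ∫ y, rho n m k y = 1 := ContDiffBump.integral_normed _

theorem rho_eq_zero {n m k : ℕ} {y : GrpPt n m} (hy : y ∉ Metric.closedBall (0 : GrpPt n m) 1) :
    rho n m k y = 0 := by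
  by_contra h
  have h1 : y ∈ Function.support (rho n m k) := h
  rw [rho, ContDiffBump.support_normed_eq] at h1
  refine hy (Metric.mem_closedBall.2 ((Metric.mem_ball.1 h1).le.trans ?_))
  change 1 / ((k : ℝ) + 1) ≤ 1
  rw [div_le_one (by positivity)]
  have : (0 : ℝ) ≤ k := k.cast_nonneg
  linarith

section moll
variable {n m : ℕ} (J : Fin m → Matrix (Fin (2*n)) (Fin (2*n)) ℝ)

/-- The set of all `y⁻¹ · x` with `x ∈ K` and `‖y‖ ≤ 1`. -/
def fat (K : Set (GrpPt n m)) : Set (GrpPt n m) :=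
  (fun q : GrpPt n m × GrpPt n m => QQ J q.1 q.2) '' (K ×ˢ Metric.closedBall 0 1)

theorem isCompact_fat {K : Set (GrpPt n m)} (hK : IsCompact K) : IsCompact (fat J K) :=
  (hK.prod (isCompact_closedBall _ _)).image (contDiff_QQ J).continuous

theorem subset_fat (K : Set (GrpPt n m)) : K ⊆ fat J K := fun x hx =>
  ⟨(x, 0), ⟨hx, Metric.mem_closedBall_self zero_le_one⟩, QQ_zero J x⟩

theorem rho_PP_eq_zero {K : Set (GrpPt n m)} {k : ℕ} {x z : GrpPt n m} (hx : x ∈ K)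
    (hz : z ∉ fat J K) : rho n m k (PP J x z) = 0 :=
  rho_eq_zero fun h => hz ⟨(x, PP J x z), ⟨hx, h⟩, QQ_PP J x z⟩

theorem isKer_rho (k : ℕ) : IsKer (fun x z => rho n m k (PP J x z)) where
  smooth := (contDiff_rho n m k).comp (contDiff_PP J)
  supp R hR := ⟨fat J R, isCompact_fat J hR, fun _ hx _ hz => rho_PP_eq_zero J hx hz⟩

/-- The flow of `X_j` leaves `x · z⁻¹` invariant, so a left-invariant derivative in `z` is minus
the same derivative in `x`. -/
theorem XD_rho_PP (k : ℕ) (j : Fin (2*n)) (x z : GrpPt n m) :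
    XD J j (fun z => rho n m k (PP J x z)) z = - XD J j (fun x => rho n m k (PP J x z)) x := by
  have hK := isKer_rho J k
  set F : GrpPt n m × GrpPt n m → ℝ := fun q => rho n m k (PP J q.1 q.2) with hF
  rw [XD_eq, XD_eq, (hK.fderiv_left x z).fderiv, (hK.fderiv_right x z).fderiv]
  have h0 : HasFDerivAt F (fderiv ℝ F (x, z)) ((x, z) + (0 : ℝ) • (Xvec J j x, Xvec J j z)) := by
    rw [zero_smul, add_zero]
    exact (hK.smooth.differentiable (by simp) _).hasFDerivAt
  have h1 : HasDerivAt (fun s : ℝ => (x, z) + s • (Xvec J j x, Xvec J j z))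
      (Xvec J j x, Xvec J j z) 0 := by
    simpa using ((hasDerivAt_id (0 : ℝ)).smul_const (Xvec J j x, Xvec J j z)).const_add (x, z)
  have h2 := h0.comp_hasDerivAt (0 : ℝ) h1
  have h3 : (F ∘ fun s : ℝ => (x, z) + s • (Xvec J j x, Xvec J j z)) = fun _ => F (x, z) := by
    funext s
    simp only [hF, Function.comp, Prod.smul_mk, Prod.mk_add_mk]
    rw [PP_flow]
  rw [h3] at h2
  have h4 := h2.unique (hasDerivAt_const (0 : ℝ) (F (x, z)))
  have h5 : ((Xvec J j x, Xvec J j z) : GrpPt n m × GrpPt n m)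
      = (Xvec J j x, 0) + (0, Xvec J j z) := by simp
  rw [h5, map_add] at h4
  simp only [ContinuousLinearMap.comp_apply, ContinuousLinearMap.inl_apply,
    ContinuousLinearMap.inr_apply]
  linarith

/-- Left mollification `ρ_k * f` for the group convolution. -/
def moll (k : ℕ) (f : GrpPt n m → ℝ) (x : GrpPt n m) : ℝ := ∫ z, f z * rho n m k (PP J x z)

theorem contDiff_moll (k : ℕ) {f : GrpPt n m → ℝ} (hf : LocallyIntegrable f) :
    ContDiff ℝ (⊤ : ℕ∞) (moll J k f) := (isKer_rho J k).contDiff_integral hf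

/-- The substitution `y = x · z⁻¹` in the mollification. -/
theorem moll_eq (k : ℕ) (f : GrpPt n m → ℝ) (x : GrpPt n m) :
    moll J k f x = ∫ y, rho n m k y * f (QQ J x y) := by
  have h : MeasurePreserving (PPequiv J x) := measurePreserving_PP J x
  rw [← h.integral_comp' (fun y => rho n m k y * f (QQ J x y))]
  refine integral_congr_ae (Eventually.of_forall fun z => ?_)
  change _ = rho n m k (PP J x z) * f (QQ J x (PP J x z))
  rw [QQ_PP, mul_comm]

theorem integral_rho_PP (k : ℕ) (x : GrpPt n m) : ∫ z, rho n m k (PP J x z) = 1 := by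
  have h : MeasurePreserving (PPequiv J x) := measurePreserving_PP J x
  exact (h.integral_comp' (rho n m k)).trans (integral_rho n m k)

/-- Pointwise bounds on mollifications from a.e. lower bounds on the enlarged set `fat J K`. -/
theorem le_moll (k : ℕ) {f : GrpPt n m → ℝ} (hf : LocallyIntegrable f) {K : Set (GrpPt n m)}
    {c : ℝ} (hc : ∀ᵐ z, z ∈ fat J K → c ≤ f z) {x : GrpPt n m} (hx : x ∈ K) :
    c ≤ moll J k f x := by
  have hK := isKer_rho J k
  have h1 : ∫ z, c * rho n m k (PP J x z) = c := by
    rw [integral_const_mul, integral_rho_PP, mul_one]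
  rw [← h1]
  refine integral_mono_ae (((hK.contDiff_right x).continuous.integrable_of_hasCompactSupport
    (hK.hasCompactSupport_right x)).const_mul c) (hK.integrable_mul hf x) ?_
  filter_upwards [hc] with z hz
  by_cases h : z ∈ fat J K
  · exact mul_le_mul_of_nonneg_right (hz h) (rho_nonneg _ _ _ _)
  · simp [rho_PP_eq_zero J hx h]

theorem abs_moll_le (k : ℕ) {f : GrpPt n m → ℝ} (hf : LocallyIntegrable f) {K : Set (GrpPt n m)}
    {c : ℝ} (hc : ∀ᵐ z, z ∈ fat J K → |f z| ≤ c) {x : GrpPt n m} (hx : x ∈ K) :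
    |moll J k f x| ≤ c := by
  have h1 := le_moll J k hf (c := -c) (hc.mono fun z hz h => (abs_le.1 (hz h)).1) hx
  have h2 := le_moll J k hf.neg (c := -c)
    (hc.mono fun z hz h => neg_le_neg (abs_le.1 (hz h)).2) hx
  have h3 : moll J k (-f) x = - moll J k f x := by
    simp [moll, integral_neg]
  rw [h3] at h2
  exact abs_le.2 ⟨h1, by linarith⟩

theorem moll_sub (k : ℕ) {f g : GrpPt n m → ℝ} (hf : LocallyIntegrable f)
    (hg : LocallyIntegrable g) : moll J k (f - g) = moll J k f - moll J k g := by
  funext x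
  have hK := isKer_rho J k
  simp only [moll, Pi.sub_apply, sub_mul]
  exact integral_sub (hK.integrable_mul hf x) (hK.integrable_mul hg x)
end moll

/-! ### Convergence of mollifications -/

theorem eLpNorm_two_sq {α : Type*} [MeasurableSpace α] (μ : Measure α) (f : α → ℝ) :
    eLpNorm f 2 μ ^ 2 = ∫⁻ x, ‖f x‖ₑ ^ 2 ∂μ := by
  have h := eLpNorm_nnreal_pow_eq_lintegral (f := f) (p := (2 : ℝ≥0)) (μ := μ) two_ne_zero
  have e : ∀ a : ℝ≥0∞, a ^ ((2 : ℝ≥0) : ℝ) = a ^ 2 := fun a => by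
    rw [← ENNReal.rpow_natCast]; norm_num
  simp only [e] at h
  exact h

theorem tendsto_eLpNorm_two_iff {α : Type*} [MeasurableSpace α] (μ : Measure α) (f : ℕ → α → ℝ) :
    Tendsto (fun k => eLpNorm (f k) 2 μ) atTop (nhds 0) ↔
      Tendsto (fun k => ∫⁻ x, ‖f k x‖ₑ ^ 2 ∂μ) atTop (nhds 0) := by
  simp only [← eLpNorm_two_sq]
  constructor
  · intro h
    have := ENNReal.Tendsto.pow (n := 2) h
    simpa using this
  · intro h
    have := (ENNReal.continuous_rpow_const (y := (1/2 : ℝ))).continuousAt.tendsto.comp h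
    have e : ∀ a : ℝ≥0∞, (a ^ 2) ^ (1/2 : ℝ) = a := fun a => by
      rw [← ENNReal.rpow_natCast, ← ENNReal.rpow_mul]; norm_num
    simp only [Function.comp_def, e] at this
    rwa [ENNReal.zero_rpow_of_pos (by norm_num)] at this

/-- Dominated convergence in `L²`. -/
theorem tendsto_eLpNorm_two_of_dominated {α : Type*} [MeasurableSpace α] {μ : Measure α}
    {f : ℕ → α → ℝ} {b : α → ℝ} (hf : ∀ k, AEStronglyMeasurable (f k) μ) (hb : MemLp b 2 μ)
    (hle : ∀ k, ∀ᵐ x ∂μ, |f k x| ≤ b x)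
    (hlim : ∀ᵐ x ∂μ, Tendsto (fun k => f k x) atTop (nhds 0)) :
    Tendsto (fun k => eLpNorm (f k) 2 μ) atTop (nhds 0) := by
  rw [tendsto_eLpNorm_two_iff]
  have h0 : ∫⁻ x, ‖(0 : ℝ)‖ₑ ^ 2 ∂μ = 0 := by simp
  rw [← h0]
  refine tendsto_lintegral_of_dominated_convergence' (fun x => ‖b x‖ₑ ^ 2)
    (fun k => (hf k).enorm.pow_const 2) ?_ ?_ ?_
  · intro k
    filter_upwards [hle k] with x hx
    gcongr
    rw [enorm_le_iff_norm_le]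
    exact hx.trans (le_abs_self _)
  · rw [← eLpNorm_two_sq]
    exact (ENNReal.pow_lt_top hb.2).ne
  · filter_upwards [hlim] with x hx
    exact ENNReal.Tendsto.pow hx.enorm

/-- Multiplication by boundedly a.e. convergent factors preserves `L²` convergence. -/
theorem tendsto_eLpNorm_mul {α : Type*} [MeasurableSpace α] {μ : Measure α}
    {a : ℕ → α → ℝ} {a' : α → ℝ} {f : ℕ → α → ℝ} {f' : α → ℝ} {C : ℝ}
    (ha : ∀ k, AEStronglyMeasurable (a k) μ) (ha' : AEStronglyMeasurable a' μ)
    (hf : ∀ k, AEStronglyMeasurable (f k) μ) (hf' : MemLp f' 2 μ)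
    (hC : ∀ k, ∀ᵐ x ∂μ, |a k x| ≤ C)
    (hlim : ∀ᵐ x ∂μ, Tendsto (fun k => a k x) atTop (nhds (a' x)))
    (hff : Tendsto (fun k => eLpNorm (f k - f') 2 μ) atTop (nhds 0)) :
    Tendsto (fun k => eLpNorm (fun x => a k x * f k x - a' x * f' x) 2 μ) atTop (nhds 0) := by
  have hC0 : ∀ᵐ x ∂μ, ∀ k, |a k x| ≤ C := ae_all_iff.2 hC
  have h1 : Tendsto (fun k => eLpNorm (fun x => (a k x - a' x) * f' x) 2 μ) atTop (nhds 0) := by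
    refine tendsto_eLpNorm_two_of_dominated (b := fun x => (2 * C) * |f' x|)
      (fun k => ((ha k).sub ha').mul hf'.1) (hf'.abs.const_mul _) ?_ ?_
    · intro k
      filter_upwards [hC0, hlim] with x hx hl
      rw [abs_mul]
      refine mul_le_mul_of_nonneg_right ?_ (abs_nonneg _)
      have h2 : |a' x| ≤ C := le_of_tendsto hl.abs (Eventually.of_forall hx)
      have := abs_sub (a k x) (a' x)
      linarith [hx k]
    · filter_upwards [hlim] with x hl
      have := (hl.sub_const (a' x)).mul_const (f' x)
      simpa using this
  have h2 : Tendsto (fun k => eLpNorm (fun x => a k x * (f k - f') x) 2 μ) atTop (nhds 0) := by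
    have h3 : Tendsto (fun k => ENNReal.ofReal C * eLpNorm (f k - f') 2 μ) atTop (nhds 0) := by
      have := ENNReal.Tendsto.const_mul (a := ENNReal.ofReal C) hff (Or.inr ENNReal.ofReal_ne_top)
      simpa using this
    refine tendsto_of_tendsto_of_tendsto_of_le_of_le tendsto_const_nhds h3 (fun _ => zero_le) ?_
    intro k
    refine eLpNorm_le_mul_eLpNorm_of_ae_le_mul ?_ 2
    filter_upwards [hC k] with x hx
    rw [norm_mul]
    exact mul_le_mul_of_nonneg_right hx (norm_nonneg _)
  have h3 := h1.add h2
  rw [add_zero] at h3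
  refine tendsto_of_tendsto_of_tendsto_of_le_of_le tendsto_const_nhds h3 (fun _ => zero_le) ?_
  intro k
  have e : (fun x => a k x * f k x - a' x * f' x)
      = (fun x => (a k x - a' x) * f' x) + fun x => a k x * (f k - f') x := by
    funext x
    simp only [Pi.add_apply, Pi.sub_apply]
    ring
  simp only [e]
  have m1 : AEStronglyMeasurable (fun x => (a k x - a' x) * f' x) μ := ((ha k).sub ha').mul hf'.1
  have m2 : AEStronglyMeasurable (fun x => a k x * (f k - f') x) μ := (ha k).mul ((hf k).sub hf'.1)
  exact eLpNorm_add_le m1 m2 one_le_two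

/-- Mollification is an `L²` contraction: Jensen's inequality for the probability density `ρ_k`, and
invariance of the volume under `x ↦ y⁻¹ · x`. -/
theorem moll_contract {n m : ℕ} (J : Fin m → Matrix (Fin (2*n)) (Fin (2*n)) ℝ) (k : ℕ)
    {f : GrpPt n m → ℝ} (hf : Measurable f) :
    eLpNorm (moll J k f) 2 volume ≤ eLpNorm f 2 volume := by
  have hr : Measurable (rho n m k) := (contDiff_rho n m k).continuous.measurable
  have hQ : Measurable (fun q : GrpPt n m × GrpPt n m => QQ J q.1 q.2) :=
    (contDiff_QQ J).continuous.measurable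
  set ν : Measure (GrpPt n m) := volume.withDensity (fun y => ENNReal.ofReal (rho n m k y)) with hν
  have hri : Integrable (rho n m k) := (bmp n m k).integrable_normed
  have hprob : IsProbabilityMeasure ν := by
    refine ⟨?_⟩
    rw [hν, withDensity_apply _ MeasurableSet.univ, Measure.restrict_univ, ← ofReal_integral_eq_lintegral_ofReal hri (Eventually.of_forall (rho_nonneg n m k)),
      integral_rho, ENNReal.ofReal_one]
  have h1 : ∀ x, ‖moll J k f x‖ₑ ^ 2
      ≤ ∫⁻ y, ENNReal.ofReal (rho n m k y) * ‖f (QQ J x y)‖ₑ ^ 2 := by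
    intro x
    have hfm : Measurable fun y => f (QQ J x y) := hf.comp (hQ.comp measurable_prodMk_left)
    have h2 : ‖moll J k f x‖ₑ ≤ eLpNorm (fun y => f (QQ J x y)) 1 ν := by
      rw [moll_eq, eLpNorm_one_eq_lintegral_enorm, hν,
        lintegral_withDensity_eq_lintegral_mul _ (by fun_prop) (by fun_prop)]
      refine (enorm_integral_le_lintegral_enorm _).trans (le_of_eq ?_)
      refine lintegral_congr fun y => ?_
      rw [enorm_mul, Real.enorm_eq_ofReal (rho_nonneg n m k y)]
      rfl
    have h3 : eLpNorm (fun y => f (QQ J x y)) 1 ν ≤ eLpNorm (fun y => f (QQ J x y)) 2 ν :=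
      eLpNorm_le_eLpNorm_of_exponent_le one_le_two hfm.aestronglyMeasurable
    calc ‖moll J k f x‖ₑ ^ 2 ≤ eLpNorm (fun y => f (QQ J x y)) 2 ν ^ 2 := by
          gcongr
          exact h2.trans h3
      _ = _ := by
          rw [eLpNorm_two_sq, hν, lintegral_withDensity_eq_lintegral_mul _ (by fun_prop) (by fun_prop)]
          rfl
  have h4 : eLpNorm (moll J k f) 2 volume ^ 2 ≤ eLpNorm f 2 volume ^ 2 := by
    rw [eLpNorm_two_sq, eLpNorm_two_sq]
    calc ∫⁻ x, ‖moll J k f x‖ₑ ^ 2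
        ≤ ∫⁻ x, ∫⁻ y, ENNReal.ofReal (rho n m k y) * ‖f (QQ J x y)‖ₑ ^ 2 := lintegral_mono h1
      _ = ∫⁻ y, ∫⁻ x, ENNReal.ofReal (rho n m k y) * ‖f (QQ J x y)‖ₑ ^ 2 := by
          refine lintegral_lintegral_swap (Measurable.aemeasurable ?_)
          have : Measurable fun q : GrpPt n m × GrpPt n m => f (QQ J q.1 q.2) := hf.comp hQ
          have h5 : Measurable fun q : GrpPt n m × GrpPt n m => rho n m k q.2 :=
            hr.comp measurable_snd
          exact h5.ennreal_ofReal.mul (this.enorm.pow_const 2)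
      _ = ∫⁻ y, ENNReal.ofReal (rho n m k y) * ∫⁻ x, ‖f x‖ₑ ^ 2 := by
          refine lintegral_congr fun y => ?_
          have hm : Measurable fun x => ‖f (QQ J x y)‖ₑ ^ 2 :=
            (hf.comp (measurePreserving_QQ J y).measurable).enorm.pow_const 2
          rw [lintegral_const_mul _ hm]
          congr 1
          exact (measurePreserving_QQ J y).lintegral_comp (hf.enorm.pow_const 2)
      _ = ∫⁻ x, ‖f x‖ₑ ^ 2 := by
          rw [lintegral_mul_const _ hr.ennreal_ofReal,
            ← ofReal_integral_eq_lintegral_ofReal hri (Eventually.of_forall (rho_nonneg n m k)),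
            integral_rho, ENNReal.ofReal_one, one_mul]
  exact (ENNReal.pow_le_pow_left_iff two_ne_zero).1 h4

/-- Measurable functions that are square integrable on compact sets. -/
def LocL2 {n m : ℕ} (f : GrpPt n m → ℝ) : Prop :=
  Measurable f ∧ ∀ K : Set (GrpPt n m), IsCompact K → MemLp f 2 (volume.restrict K)

section conv
variable {n m : ℕ} (J : Fin m → Matrix (Fin (2*n)) (Fin (2*n)) ℝ)

theorem isFiniteMeasure_restrict_compact {K : Set (GrpPt n m)} (hK : IsCompact K) :
    IsFiniteMeasure ((volume : Measure (GrpPt n m)).restrict K) :=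
  isFiniteMeasure_restrict.2 hK.measure_lt_top.ne

theorem LocL2.locallyIntegrable {f : GrpPt n m → ℝ} (hf : LocL2 f) : LocallyIntegrable f := by
  rw [locallyIntegrable_iff]
  intro K hK
  have := isFiniteMeasure_restrict_compact hK
  exact (hf.2 K hK).integrable one_le_two

theorem locL2_of_bdd {f : GrpPt n m → ℝ} (hf : Measurable f)
    (h : ∀ K : Set (GrpPt n m), IsCompact K → ∃ C : ℝ, ∀ᵐ y, y ∈ K → |f y| ≤ C) : LocL2 f := by
  refine ⟨hf, fun K hK => ?_⟩
  obtain ⟨C, hC⟩ := h K hK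
  have := isFiniteMeasure_restrict_compact hK
  exact MemLp.of_bound hf.aestronglyMeasurable C ((ae_restrict_iff' hK.measurableSet).2 hC)

theorem locL2_of_continuous {f : GrpPt n m → ℝ} (hf : Continuous f) : LocL2 f :=
  locL2_of_bdd hf.measurable fun K hK => by
    obtain ⟨C, hC⟩ := hK.exists_bound_of_continuousOn hf.continuousOn
    exact ⟨C, Eventually.of_forall fun y hy => hC y hy⟩

theorem tendsto_moll {h : GrpPt n m → ℝ} (hh : Continuous h) (x : GrpPt n m) :
    Tendsto (fun k => moll J k h x) atTop (nhds (h x)) := by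
  have hr : Tendsto (fun k => (bmp n m k).rOut) atTop (nhds 0) := tendsto_one_div_add_atTop_nhds_zero_nat
  have hc : Continuous fun t => h (QQ J x (-t)) :=
    hh.comp ((contDiff_QQ J).continuous.comp (continuous_const.prodMk continuous_neg))
  have h1 := ContDiffBump.convolution_tendsto_right (μ := (volume : Measure (GrpPt n m)))
    (g := fun _ : ℕ => fun t => h (QQ J x (-t))) (k := fun _ => 0) (x₀ := 0) (z₀ := h x) hr
    (Eventually.of_forall fun _ => hc.aestronglyMeasurable)
    (by
      have := (hc.tendsto 0).comp (tendsto_snd (f := (atTop : Filter ℕ)) (g := nhds (0 : GrpPt n m)))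
      simp only [neg_zero, QQ_zero] at this
      exact this) tendsto_const_nhds
  refine h1.congr fun k => ?_
  rw [moll_eq]
  simp [convolution, rho]

/-- Mollifications converge in `L²` on compact sets. -/
theorem tendsto_moll_eLpNorm {f : GrpPt n m → ℝ} (hf : LocL2 f) {K : Set (GrpPt n m)}
    (hK : IsCompact K) :
    Tendsto (fun k => eLpNorm (moll J k f - f) 2 (volume.restrict K)) atTop (nhds 0) := by
  have hfin := isFiniteMeasure_restrict_compact hK
  set f' := (fat J K).indicator f with hf'
  have hfat := isCompact_fat J hK
  have hm' : Measurable f' := hf.1.indicator hfat.measurableSet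
  have hL' : MemLp f' 2 volume := (memLp_indicator_iff_restrict hfat.measurableSet).2 (hf.2 _ hfat)
  have hcongr : ∀ k, eLpNorm (moll J k f - f) 2 (volume.restrict K)
      = eLpNorm (moll J k f' - f') 2 (volume.restrict K) := by
    intro k
    refine eLpNorm_congr_ae ?_
    filter_upwards [ae_restrict_mem hK.measurableSet] with x hx
    simp only [Pi.sub_apply]
    congr 1
    · refine integral_congr_ae (Eventually.of_forall fun z => ?_)
      by_cases hz : z ∈ fat J K
      · simp [hf', hz]
      · simp [rho_PP_eq_zero J hx hz]
    · simp [hf', subset_fat J K hx]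
  simp only [hcongr]
  rw [ENNReal.tendsto_nhds_zero]
  intro ε hε
  obtain ⟨h, hhs, hhe, hhc, hhL⟩ := hL'.exists_hasCompactSupport_eLpNorm_sub_le (by norm_num)
    (ε := ε / 3) (by simpa using hε.ne')
  have hli' : LocallyIntegrable f' := hL'.locallyIntegrable one_le_two
  have hlih : LocallyIntegrable h := hhc.locallyIntegrable
  have hcm : ∀ {u : GrpPt n m → ℝ}, LocallyIntegrable u → ∀ k, Measurable (moll J k u) :=
    fun hu k => (contDiff_moll J k hu).continuous.measurable
  have h2 : Tendsto (fun k => eLpNorm (moll J k h - h) 2 (volume.restrict K)) atTop (nhds 0) := by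
    obtain ⟨M, hM⟩ := hhs.exists_bound_of_continuous hhc
    refine tendsto_eLpNorm_two_of_dominated (b := fun _ => M + M)
      (fun k => ((hcm hlih k).sub hhc.measurable).aestronglyMeasurable) (memLp_const _) ?_ ?_
    · refine fun k => Eventually.of_forall fun x => ?_
      have h3 : |moll J k h x| ≤ M :=
        abs_moll_le J k hlih (K := Set.univ) (Eventually.of_forall fun z _ => hM z) trivial
      exact (abs_sub _ _).trans (add_le_add h3 (hM x))
    · refine Eventually.of_forall fun x => ?_
      have := (tendsto_moll J hhc x).sub_const (h x)
      simpa using this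
  have h3 := (ENNReal.tendsto_nhds_zero.1 h2) (ε / 3) (by
    exact ENNReal.div_pos hε.ne' (by norm_num))
  filter_upwards [h3] with k hk
  have e : moll J k f' - f' = (moll J k (f' - h) + (moll J k h - h)) + (h - f') := by
    rw [moll_sub J k hli' hlih]
    abel
  have hms : Measurable (moll J k (f' - h)) := hcm (hli'.sub hlih) k
  have hmh : Measurable (moll J k h - h) := (hcm hlih k).sub hhc.measurable
  have a1 : eLpNorm (moll J k (f' - h)) 2 (volume.restrict K) ≤ ε / 3 :=
    (eLpNorm_mono_measure _ Measure.restrict_le_self).trans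
      ((moll_contract J k (hm'.sub hhc.measurable)).trans hhe)
  have a2 : eLpNorm (h - f') 2 (volume.restrict K) ≤ ε / 3 := by
    rw [eLpNorm_sub_comm]
    exact (eLpNorm_mono_measure _ Measure.restrict_le_self).trans hhe
  rw [e]
  calc _ ≤ eLpNorm (moll J k (f' - h) + (moll J k h - h)) 2 (volume.restrict K)
        + eLpNorm (h - f') 2 (volume.restrict K) :=
        eLpNorm_add_le (hms.add hmh).aestronglyMeasurable
          (hhc.measurable.sub hm').aestronglyMeasurable one_le_two
    _ ≤ (ε / 3 + ε / 3) + ε / 3 := by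
        gcongr
        exact (eLpNorm_add_le hms.aestronglyMeasurable hmh.aestronglyMeasurable one_le_two).trans
          (add_le_add a1 hk)
    _ = ε := ENNReal.add_thirds ε

/-- For finitely many functions one subsequence of mollifications converges a.e. on a compact
set. -/
theorem exists_seq_tendsto_moll {ι : Type*} [Fintype ι] {f : ι → GrpPt n m → ℝ}
    (hf : ∀ i, LocL2 (f i)) {K : Set (GrpPt n m)} (hK : IsCompact K) :
    ∃ ns : ℕ → ℕ, StrictMono ns ∧ ∀ᵐ x ∂(volume.restrict K), ∀ i,
      Tendsto (fun k => moll J (ns k) (f i) x) atTop (nhds (f i x)) := by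
  have hm : ∀ i k, Measurable (moll J k (f i) - f i) := fun i k =>
    (contDiff_moll J k (hf i).locallyIntegrable).continuous.measurable.sub (hf i).1
  set S : ℕ → GrpPt n m → ℝ := fun k => ∑ i, fun x => ‖(moll J k (f i) - f i) x‖ with hS
  have hS0 : Tendsto (fun k => eLpNorm (S k - 0) 2 (volume.restrict K)) atTop (nhds 0) := by
    have h1 : Tendsto (fun k => ∑ i, eLpNorm (moll J k (f i) - f i) 2 (volume.restrict K)) atTop
        (nhds 0) := by
      have := tendsto_finsetSum (Finset.univ : Finset ι)
        (fun i _ => tendsto_moll_eLpNorm J (hf i) hK)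
      simpa using this
    refine tendsto_of_tendsto_of_tendsto_of_le_of_le tendsto_const_nhds h1 (fun _ => zero_le) ?_
    intro k
    simp only [sub_zero]
    refine (eLpNorm_sum_le (fun i _ => (hm i k).norm.aestronglyMeasurable) one_le_two).trans ?_
    refine Finset.sum_le_sum fun i _ => ?_
    rw [eLpNorm_norm]
  have hSm : ∀ k, Measurable (S k) := fun k => by
    have : S k = fun x => ∑ i, ‖(moll J k (f i) - f i) x‖ := by
      funext x
      simp [hS]
    rw [this]
    exact Finset.measurable_sum _ fun i _ => (hm i k).norm
  obtain ⟨ns, hns, hlim⟩ := (tendstoInMeasure_of_tendsto_eLpNorm two_ne_zero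
    (fun k => (hSm k).aestronglyMeasurable) aestronglyMeasurable_zero hS0).exists_seq_tendsto_ae
  refine ⟨ns, hns, ?_⟩
  filter_upwards [hlim] with x hx i
  rw [← tendsto_sub_nhds_zero_iff]
  refine squeeze_zero_norm (fun k => ?_) hx
  simp only [hS, Finset.sum_apply]
  exact Finset.single_le_sum (f := fun i => ‖(moll J (ns k) (f i) - f i) x‖)
    (fun i _ => norm_nonneg _) (Finset.mem_univ i)
end conv

/-! ### The energy estimate for smooth data -/

section pointwise
variable {n m : ℕ} (J : Fin m → Matrix (Fin (2*n)) (Fin (2*n)) ℝ)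

theorem XD_neg (j : Fin (2*n)) (f : GrpPt n m → ℝ) (p : GrpPt n m) :
    XD J j (fun q => - f q) p = - XD J j f p := by
  simp [XD_eq, fderiv_fun_neg]

/-- Moving a horizontal derivative of a mollification onto the kernel. -/
theorem XD_moll_eq (k : ℕ) {f : GrpPt n m → ℝ} (hf : LocallyIntegrable f) (j : Fin (2*n))
    (x : GrpPt n m) :
    XD J j (moll J k f) x = - ∫ z, f z * XD J j (fun z => rho n m k (PP J x z)) z := by
  have h := (isKer_rho J k).XD_integral hf J j x
  refine h.trans ?_
  rw [← integral_neg]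
  refine integral_congr_ae (Eventually.of_forall fun z => ?_)
  simp only [XD_rho_PP]
  ring

theorem XD_XD_moll_eq (k : ℕ) {f : GrpPt n m → ℝ} (hf : LocallyIntegrable f) (j : Fin (2*n))
    (x : GrpPt n m) :
    XD J j (XD J j (moll J k f)) x
      = ∫ z, f z * XD J j (XD J j (fun z => rho n m k (PP J x z))) z := by
  have hK := isKer_rho (n := n) (m := m) J k
  have h1 : XD J j (moll J k f)
      = fun x => ∫ z, f z * XD J j (fun x => rho n m k (PP J x z)) x :=
    funext fun x => hK.XD_integral hf J j x
  rw [h1, (hK.XD_left J j).XD_integral hf J j x]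
  refine integral_congr_ae (Eventually.of_forall fun z => ?_)
  simp only
  congr 1
  -- `X^x X^x ρ = -X^x X^z ρ = -X^z X^x ρ = X^z X^z ρ`
  have e1 : (fun x => XD J j (fun x => rho n m k (PP J x z)) x)
      = fun x => - XD J j (fun z => rho n m k (PP J x z)) z := funext fun x => by
    rw [XD_rho_PP, neg_neg]
  have e2 : XD J j (fun z => rho n m k (PP J x z))
      = fun z => - XD J j (fun x => rho n m k (PP J x z)) x := funext fun z => XD_rho_PP J k j x z
  rw [e1, XD_neg, e2, XD_neg, hK.XD_comm J j j x z]

/-- Mollification commutes with weak horizontal derivatives. -/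
theorem XD_moll_weak (k : ℕ) {w g : GrpPt n m → ℝ} (hw : LocallyIntegrable w) (j : Fin (2*n))
    (hweak : ∀ φ : GrpPt n m → ℝ, ContDiff ℝ (⊤ : ℕ∞) φ → HasCompactSupport φ →
      ∫ y, w y * XD J j φ y = -∫ y, g y * φ y) :
    XD J j (moll J k w) = moll J k g := by
  funext x
  have hK := isKer_rho (n := n) (m := m) J k
  rw [XD_moll_eq J k hw, hweak _ (hK.contDiff_right x) (hK.hasCompactSupport_right x), neg_neg]
  rfl

/-- Mollifying the weak equation `L v + ∑ X_j F_j + v = 0`. -/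
theorem moll_equation (k : ℕ) {v : GrpPt n m → ℝ} {F : Fin (2*n) → GrpPt n m → ℝ}
    (hv : LocallyIntegrable v) (hF : ∀ j, LocallyIntegrable (F j))
    (heq : ∀ φ : GrpPt n m → ℝ, ContDiff ℝ (⊤ : ℕ∞) φ → HasCompactSupport φ →
      ∫ y, (v y * LSub J φ y - ∑ j, F j y * XD J j φ y + v y * φ y) = 0) (x : GrpPt n m) :
    ∑ j, (XD J j (XD J j (moll J k v)) x - XD J j (moll J k (F j)) x) = moll J k v x := by
  have hK := isKer_rho (n := n) (m := m) J k
  set φ : GrpPt n m → ℝ := fun z => rho n m k (PP J x z) with hφ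
  have hs : ContDiff ℝ (⊤ : ℕ∞) φ := hK.contDiff_right x
  have hc : HasCompactSupport φ := hK.hasCompactSupport_right x
  have hint : ∀ {f ψ : GrpPt n m → ℝ}, LocallyIntegrable f → ContDiff ℝ (⊤ : ℕ∞) ψ →
      HasCompactSupport ψ → Integrable (fun y => f y * ψ y) := fun hf h1 h2 =>
    hf.integrable_smul_right_of_hasCompactSupport h1.continuous h2
  have h1 : ∀ j, Integrable (fun y => v y * XD J j (XD J j φ) y) := fun j =>
    hint hv (contDiff_XD J j (contDiff_XD J j hs)) (hasCompactSupport_XD J j (hasCompactSupport_XD J j hc))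
  have h2 : ∀ j, Integrable (fun y => F j y * XD J j φ y) := fun j =>
    hint (hF j) (contDiff_XD J j hs) (hasCompactSupport_XD J j hc)
  have h3 := heq φ hs hc
  have e : ∀ y, v y * LSub J φ y - ∑ j, F j y * XD J j φ y + v y * φ y
      = v y * φ y - ∑ j, (v y * XD J j (XD J j φ) y + F j y * XD J j φ y) := by
    intro y
    rw [LSub, Finset.sum_add_distrib, ← Finset.mul_sum]
    ring
  simp only [e] at h3
  have h12 : ∀ j, Integrable (fun y => v y * XD J j (XD J j φ) y + F j y * XD J j φ y) :=
    fun j => (h1 j).add (h2 j)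
  rw [integral_sub (hint hv hs hc) (integrable_finsetSum _ fun j _ => h12 j),
    integral_finsetSum _ (fun j _ => h12 j)] at h3
  have e2 : ∀ j, ∫ y, (v y * XD J j (XD J j φ) y + F j y * XD J j φ y)
      = XD J j (XD J j (moll J k v)) x - XD J j (moll J k (F j)) x := by
    intro j
    rw [integral_add (h1 j) (h2 j), XD_XD_moll_eq J k hv, XD_moll_eq J k (hF j)]
    ring
  simp only [e2] at h3
  have h4 : moll J k v x = ∫ y, v y * φ y := rfl
  linarith

/-- A Caccioppoli-type estimate for smooth data. Here `D_j = X_j V - F_j` satisfies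
`∑ X_j D_j = V`, and the equation is tested with `η² V / W`; the square is completed so that no
term containing `D_j` survives. -/
theorem smooth_energy {V W η : GrpPt n m → ℝ} {F : Fin (2*n) → GrpPt n m → ℝ}
    (hV : ContDiff ℝ (⊤ : ℕ∞) V) (hW : ContDiff ℝ (⊤ : ℕ∞) W) (hη : ContDiff ℝ (⊤ : ℕ∞) η)
    (hF : ∀ j, ContDiff ℝ (⊤ : ℕ∞) (F j)) (hc : HasCompactSupport η) (hpos : ∀ x, 0 < W x)
    (heq : ∀ x, ∑ j, (XD J j (XD J j V) x - XD J j (F j) x) = V x) :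
    ∫ x, (η x * V x) ^ 2 / W x ≤ ∑ j, ∫ x,
      (XD J j η x * V x - 1/2 * η x * (V x * XD J j W x / W x - F j x)) ^ 2 / W x := by
  have hW0 : ∀ x, W x ≠ 0 := fun x => (hpos x).ne'
  have hXW : ∀ j, ContDiff ℝ (⊤ : ℕ∞) (XD J j W) := fun j => contDiff_XD J j hW
  have hXη : ∀ j, ContDiff ℝ (⊤ : ℕ∞) (XD J j η) := fun j => contDiff_XD J j hη
  set D : Fin (2*n) → GrpPt n m → ℝ := fun j x => XD J j V x - F j x with hD
  have hDs : ∀ j, ContDiff ℝ (⊤ : ℕ∞) (D j) := fun j => (contDiff_XD J j hV).sub (hF j)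
  set ψ : GrpPt n m → ℝ := fun x => V x * (W x)⁻¹ with hψ
  have hWi : ContDiff ℝ (⊤ : ℕ∞) (fun x => (W x)⁻¹) := hW.inv hW0
  have hψs : ContDiff ℝ (⊤ : ℕ∞) ψ := hV.mul hWi
  have hηη : ContDiff ℝ (⊤ : ℕ∞) (fun x => η x * η x) := hη.mul hη
  set φ : GrpPt n m → ℝ := fun x => (η x * η x) * ψ x with hφ
  have hφs : ContDiff ℝ (⊤ : ℕ∞) φ := hηη.mul hψs
  have hφc : HasCompactSupport φ := (hc.mul_right (f' := η)).mul_right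
  have hd : ∀ {f : GrpPt n m → ℝ}, ContDiff ℝ (⊤ : ℕ∞) f → ∀ x, DifferentiableAt ℝ f x :=
    fun hf x => hf.differentiable (by simp) x
  have hXinv : ∀ j x, XD J j (fun x => (W x)⁻¹) x = - XD J j W x / W x ^ 2 := by
    intro j x
    have h := XD_mul J j (p := x) (hd hW x) (hd hWi x)
    have h1 : (fun q => W q * (W q)⁻¹) = fun _ => (1 : ℝ) := funext fun q => mul_inv_cancel₀ (hW0 q)
    rw [h1] at h
    have h2 : XD J j (fun _ : GrpPt n m => (1 : ℝ)) x = 0 := by simp [XD_eq]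
    rw [h2] at h
    have := hW0 x
    field_simp
    field_simp at h
    linarith
  have hXφ : ∀ j x, XD J j φ x = (2 * η x * XD J j η x) * (V x / W x)
      + η x ^ 2 * (XD J j V x / W x - V x * XD J j W x / W x ^ 2) := by
    intro j x
    rw [hφ, XD_mul J j (hd hηη x) (hd hψs x), XD_mul J j (hd hη x) (hd hη x), hψ,
      XD_mul J j (hd hV x) (hd hWi x), hXinv]
    ring
  set S : Fin (2*n) → GrpPt n m → ℝ := fun j => XD J j (fun x => D j x * φ x) with hS
  have hS0 : ∀ j, ∫ x, S j x = 0 := fun j =>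
    integral_XD_eq_zero J j ((hDs j).mul hφs) hφc.mul_left
  have hSi : ∀ j, Integrable (S j) := fun j =>
    (contDiff_XD J j ((hDs j).mul hφs)).continuous.integrable_of_hasCompactSupport
      (hasCompactSupport_XD J j hφc.mul_left)
  have hSe : ∀ j x, S j x = D j x * XD J j φ x + XD J j (D j) x * φ x := fun j x =>
    XD_mul J j (hd (hDs j) x) (hd hφs x)
  have hsum : ∀ x, ∑ j, XD J j (D j) x = V x := by
    intro x
    rw [← heq x]
    refine Finset.sum_congr rfl fun j _ => ?_
    rw [XD_eq J j (D j), XD_eq J j (XD J j V), XD_eq J j (F j), hD,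
      fderiv_fun_sub (hd (contDiff_XD J j hV) x) (hd (hF j) x)]
    simp
  set R : Fin (2*n) → GrpPt n m → ℝ := fun j x =>
    (XD J j η x * V x - 1/2 * η x * (V x * XD J j W x / W x - F j x)) ^ 2 / W x with hR
  have hRi : ∀ j, Integrable (R j) := by
    intro j
    have cV := hV.continuous
    have cW := hW.continuous
    have c1 := (hXη j).continuous
    have c2 := (hXW j).continuous
    have c3 := (hF j).continuous
    have c4 := hη.continuous
    refine Continuous.integrable_of_hasCompactSupport ?_ (hc.mono' ?_)
    · exact (((c1.mul cV).sub ((continuous_const.mul c4).mul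
        (((cV.mul c2).div cW hW0).sub c3))).pow 2).div cW hW0
    · intro x hx
      by_contra h
      have z1 : η x = 0 := image_eq_zero_of_notMem_tsupport h
      have z2 : XD J j η x = 0 := by
        by_contra h2
        exact h (tsupport_XD_subset J j η h2)
      exact hx (by simp [hR, z1, z2])
  have hpt : ∀ x, (η x * V x) ^ 2 / W x ≤ ∑ j, (S j x + R j x) := by
    intro x
    have e1 : (η x * V x) ^ 2 / W x = ∑ j, XD J j (D j) x * φ x := by
      rw [← Finset.sum_mul, hsum, hφ, hψ]
      simp only
      ring
    rw [e1]
    refine Finset.sum_le_sum fun j _ => ?_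
    rw [hSe]
    have e2 : D j x * XD J j φ x + R j x = (η x * D j x + (XD J j η x * V x
        - 1/2 * η x * (V x * XD J j W x / W x - F j x))) ^ 2 / W x := by
      rw [hXφ, hR]
      simp only [hD]
      have := hW0 x
      field_simp
      ring
    have e3 : 0 ≤ D j x * XD J j φ x + R j x := by
      rw [e2]
      exact div_nonneg (sq_nonneg _) (hpos x).le
    linarith
  calc ∫ x, (η x * V x) ^ 2 / W x ≤ ∫ x, ∑ j, (S j x + R j x) := by
        refine integral_mono ?_ (integrable_finsetSum _ fun j _ => (hSi j).add (hRi j)) hpt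
        refine Continuous.integrable_of_hasCompactSupport
          (((hη.continuous.mul hV.continuous).pow 2).div hW.continuous hW0) (hc.mono ?_)
        intro x hx h
        exact hx (by simp [h])
    _ = ∑ j, ∫ x, R j x := by
        have hSR : ∀ j, Integrable (fun x => S j x + R j x) := fun j => (hSi j).add (hRi j)
        rw [integral_finsetSum _ fun j _ => hSR j]
        refine Finset.sum_congr rfl fun j _ => ?_
        rw [integral_add (hSi j) (hRi j), hS0, zero_add]
end pointwise

/-! ### The energy estimate for weak solutions -/

/-- A positive weight `w`, locally bounded with locally bounded inverse, and its weak horizontal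
gradient `g`, locally bounded too. -/
structure IsWt {n m : ℕ} (J : Fin m → Matrix (Fin (2*n)) (Fin (2*n)) ℝ) (w : GrpPt n m → ℝ)
    (g : Fin (2*n) → GrpPt n m → ℝ) : Prop where
  meas : Measurable w
  pos : ∀ y, 0 < w y
  bdd : ∀ K : Set (GrpPt n m), IsCompact K →
    ∃ C : ℝ, ∀ᵐ y ∂(volume : Measure (GrpPt n m)), y ∈ K → w y ≤ C
  inv_bdd : ∀ K : Set (GrpPt n m), IsCompact K →
    ∃ C : ℝ, ∀ᵐ y ∂(volume : Measure (GrpPt n m)), y ∈ K → (w y)⁻¹ ≤ C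
  gmeas : ∀ j, Measurable (g j)
  weak : ∀ j, ∀ φ : GrpPt n m → ℝ, ContDiff ℝ (⊤ : ℕ∞) φ → HasCompactSupport φ →
    ∫ y, w y * XD J j φ y = -∫ y, g j y * φ y
  gbdd : ∀ j, ∀ K : Set (GrpPt n m), IsCompact K →
    ∃ C : ℝ, ∀ᵐ y ∂(volume : Measure (GrpPt n m)), y ∈ K → |g j y| ≤ C

section energy
variable {n m : ℕ} {J : Fin m → Matrix (Fin (2*n)) (Fin (2*n)) ℝ}

theorem locL2_mul_bdd {b f : GrpPt n m → ℝ} (hb : Measurable b)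
    (h : ∀ K : Set (GrpPt n m), IsCompact K → ∃ C : ℝ, ∀ᵐ y, y ∈ K → |b y| ≤ C) (hf : LocL2 f) :
    LocL2 (fun y => b y * f y) := by
  refine ⟨hb.mul hf.1, fun K hK => ?_⟩
  obtain ⟨C, hC⟩ := h K hK
  refine MemLp.of_le_mul (c := C) (hf.2 K hK) (hb.mul hf.1).aestronglyMeasurable ?_
  filter_upwards [(ae_restrict_iff' hK.measurableSet).2 hC] with y hy
  rw [norm_mul]
  exact mul_le_mul_of_nonneg_right hy (norm_nonneg _)

theorem eLpNorm_sq_eq_ofReal {f : GrpPt n m → ℝ} (hf : Continuous f) (hc : HasCompactSupport f) :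
    eLpNorm f 2 volume ^ 2 = ENNReal.ofReal (∫ x, f x ^ 2) := by
  have hi : Integrable (fun x => f x ^ 2) := by
    refine (hf.pow 2).integrable_of_hasCompactSupport (hc.mono fun x hx h => hx ?_)
    simp [h]
  rw [eLpNorm_two_sq, ofReal_integral_eq_lintegral_ofReal hi
    (Eventually.of_forall fun x => sq_nonneg _)]
  refine lintegral_congr fun x => ?_
  rw [Real.enorm_eq_ofReal_abs, ← ENNReal.ofReal_pow (abs_nonneg _), sq_abs]

theorem tendsto_eLpNorm_of_sub {α : Type*} [MeasurableSpace α] {μ : Measure α}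
    {f : ℕ → α → ℝ} {f' : α → ℝ} (hf : ∀ k, AEStronglyMeasurable (f k) μ)
    (hf' : MemLp f' 2 μ) (h : Tendsto (fun k => eLpNorm (fun x => f k x - f' x) 2 μ) atTop (nhds 0)) :
    Tendsto (fun k => eLpNorm (f k) 2 μ) atTop (nhds (eLpNorm f' 2 μ)) := by
  have h1 : Tendsto (fun k => eLpNorm f' 2 μ - eLpNorm (fun x => f k x - f' x) 2 μ) atTop
      (nhds (eLpNorm f' 2 μ)) := by
    have := ENNReal.Tendsto.sub (a := eLpNorm f' 2 μ) tendsto_const_nhds h (Or.inl hf'.2.ne)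
    simpa using this
  have h2 : Tendsto (fun k => eLpNorm f' 2 μ + eLpNorm (fun x => f k x - f' x) 2 μ) atTop
      (nhds (eLpNorm f' 2 μ)) := by
    have := (tendsto_const_nhds (x := eLpNorm f' 2 μ)).add h
    simpa using this
  refine tendsto_of_tendsto_of_tendsto_of_le_of_le h1 h2 (fun k => ?_) (fun k => ?_)
  · rw [tsub_le_iff_right]
    have e : f' = f k + fun x => -(f k x - f' x) := by
      funext x
      simp
    calc eLpNorm f' 2 μ = eLpNorm (f k + fun x => -(f k x - f' x)) 2 μ := by rw [← e]
      _ ≤ eLpNorm (f k) 2 μ + eLpNorm (fun x => -(f k x - f' x)) 2 μ :=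
        eLpNorm_add_le (hf k) ((hf k).sub hf'.1).neg one_le_two
      _ = _ := by
        have e2 : (fun x => -(f k x - f' x)) = -fun x => (f k x - f' x) := rfl
        rw [e2, eLpNorm_neg]
  · have e : f k = f' + fun x => (f k x - f' x) := by
      funext x
      simp
    calc eLpNorm (f k) 2 μ = eLpNorm (f' + fun x => (f k x - f' x)) 2 μ := by rw [← e]
      _ ≤ _ := eLpNorm_add_le hf'.1 ((hf k).sub hf'.1) one_le_two

theorem tendsto_eLpNorm_sub_add {α : Type*} [MeasurableSpace α] {μ : Measure α}
    {a b : ℕ → α → ℝ} {a' b' c' : α → ℝ} (ha : ∀ k, AEStronglyMeasurable (a k) μ)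
    (hb : ∀ k, AEStronglyMeasurable (b k) μ) (ha' : AEStronglyMeasurable a' μ)
    (hb' : AEStronglyMeasurable b' μ) (hc : ∀ x, a' x + b' x = c' x)
    (h1 : Tendsto (fun k => eLpNorm (fun x => a k x - a' x) 2 μ) atTop (nhds 0))
    (h2 : Tendsto (fun k => eLpNorm (fun x => b k x - b' x) 2 μ) atTop (nhds 0)) :
    Tendsto (fun k => eLpNorm (fun x => (a k x + b k x) - c' x) 2 μ) atTop (nhds 0) := by
  have t3 := h1.add h2
  rw [add_zero] at t3
  refine tendsto_of_tendsto_of_tendsto_of_le_of_le tendsto_const_nhds t3 (fun _ => zero_le) ?_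
  intro k
  have e : (fun x => (a k x + b k x) - c' x)
      = (fun x => a k x - a' x) + fun x => b k x - b' x := by
    funext x
    simp only [Pi.add_apply]
    rw [← hc x]
    ring
  simp only [e]
  exact eLpNorm_add_le ((ha k).sub ha') ((hb k).sub hb') one_le_two

/-- `smooth_energy` in terms of `L²` norms, with `r = W^{-1/2}`. -/
theorem smooth_energy_norm {V W η r : GrpPt n m → ℝ} {F G : Fin (2*n) → GrpPt n m → ℝ}
    (hV : ContDiff ℝ (⊤ : ℕ∞) V) (hW : ContDiff ℝ (⊤ : ℕ∞) W) (hη : ContDiff ℝ (⊤ : ℕ∞) η)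
    (hF : ∀ j, ContDiff ℝ (⊤ : ℕ∞) (F j)) (hc : HasCompactSupport η) (hpos : ∀ x, 0 < W x)
    (hr : ∀ x, r x ^ 2 = (W x)⁻¹) (hrc : Continuous r) (hG : ∀ j, XD J j W = G j)
    (heq : ∀ x, ∑ j, (XD J j (XD J j V) x - XD J j (F j) x) = V x) :
    eLpNorm (fun x => (η x * r x) * V x) 2 volume ^ 2
      ≤ ∑ j, eLpNorm (fun x => (XD J j η x * r x - 1/2 * η x * G j x * r x ^ 3) * V x
          + (1/2 * η x * r x) * F j x) 2 volume ^ 2 := by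
  have h := smooth_energy J hV hW hη hF hc hpos heq
  have hGc : ∀ j, Continuous (G j) := fun j => by
    rw [← hG j]
    exact (contDiff_XD J j hW).continuous
  have hXη := fun j => (contDiff_XD J j hη).continuous
  have hηc := hη.continuous
  have hVc := hV.continuous
  have hcR : ∀ j, HasCompactSupport
      (fun x => (XD J j η x * r x - 1/2 * η x * G j x * r x ^ 3) * V x
          + (1/2 * η x * r x) * F j x) := fun j => hc.mono' fun x hx => by
    by_contra h
    have z1 : η x = 0 := image_eq_zero_of_notMem_tsupport h
    have z2 : XD J j η x = 0 := by
      by_contra h2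
      exact h (tsupport_XD_subset J j η h2)
    exact hx (by simp [z1, z2])
  have hcL : HasCompactSupport (fun x => (η x * r x) * V x) := hc.mono fun x hx h => hx (by simp [h])
  have hcont : ∀ j, Continuous (fun x => (XD J j η x * r x - 1/2 * η x * G j x * r x ^ 3) * V x
          + (1/2 * η x * r x) * F j x) := fun j => by
    have := hGc j
    have := hXη j
    have := (hF j).continuous
    fun_prop
  rw [eLpNorm_sq_eq_ofReal (by fun_prop) hcL]
  have e : ∀ j, eLpNorm (fun x => (XD J j η x * r x - 1/2 * η x * G j x * r x ^ 3) * V x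
          + (1/2 * η x * r x) * F j x) 2 volume ^ 2 = ENNReal.ofReal (∫ x,
      (XD J j η x * V x - 1/2 * η x * (V x * XD J j W x / W x - F j x)) ^ 2 / W x) := by
    intro j
    rw [eLpNorm_sq_eq_ofReal (hcont j) (hcR j)]
    congr 1
    refine integral_congr_ae (Eventually.of_forall fun x => ?_)
    simp only [hG, div_eq_mul_inv, ← hr x]
    ring
  simp only [e]
  rw [← ENNReal.ofReal_sum_of_nonneg fun j _ => integral_nonneg fun x =>
    div_nonneg (sq_nonneg _) (hpos x).le]
  refine ENNReal.ofReal_le_ofReal (le_trans (le_of_eq ?_) h)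
  refine integral_congr_ae (Eventually.of_forall fun x => ?_)
  simp only [div_eq_mul_inv, ← hr x]
  ring

theorem memLp_bdd_mul {α : Type*} [MeasurableSpace α] {μ : Measure α} {b f : α → ℝ} {M : ℝ}
    (hb : AEStronglyMeasurable b μ) (hM : ∀ x, |b x| ≤ M) (hf : MemLp f 2 μ) :
    MemLp (fun x => b x * f x) 2 μ :=
  MemLp.of_le_mul (c := M) hf (hb.mul hf.1) (Eventually.of_forall fun x => by
    rw [norm_mul]
    exact mul_le_mul_of_nonneg_right (hM x) (norm_nonneg _))

/-- The energy estimate for weak solutions, obtained from `smooth_energy` by mollification. -/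
theorem weak_energy {w : GrpPt n m → ℝ} {g : Fin (2*n) → GrpPt n m → ℝ} (hw : IsWt J w g)
    {u : GrpPt n m → ℝ} (hu : MemLp (fun x => Real.sqrt (w x) * u x) 2 volume)
    (hv : LocL2 (fun y => w y * u y)) (hF : ∀ j, LocL2 (fun y => g j y * u y))
    (heq : ∀ φ : GrpPt n m → ℝ, ContDiff ℝ (⊤ : ℕ∞) φ → HasCompactSupport φ →
      ∫ y, ((w y * u y) * LSub J φ y - ∑ j, (g j y * u y) * XD J j φ y + (w y * u y) * φ y) = 0)
    {η : GrpPt n m → ℝ} (hη : ContDiff ℝ (⊤ : ℕ∞) η) (hc : HasCompactSupport η) :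
    eLpNorm (fun x => η x * (Real.sqrt (w x) * u x)) 2 volume ^ 2
      ≤ ∑ j, eLpNorm (fun x => XD J j η x * (Real.sqrt (w x) * u x)) 2 volume ^ 2 := by
  set K := tsupport η with hKdef
  have hK : IsCompact K := hc
  have hfin := isFiniteMeasure_restrict_compact hK
  set μ := (volume : Measure (GrpPt n m)).restrict K with hμ
  have hLw : LocL2 w := locL2_of_bdd hw.meas fun K hK => by
    obtain ⟨C, hC⟩ := hw.bdd K hK
    exact ⟨C, hC.mono fun y hy hyK => by rw [abs_of_pos (hw.pos y)]; exact hy hyK⟩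
  have hLg : ∀ j, LocL2 (g j) := fun j => locL2_of_bdd (hw.gmeas j) (hw.gbdd j)
  obtain ⟨ns, hns, hlim⟩ := exists_seq_tendsto_moll J
    (f := fun i : Option (Fin (2*n)) => i.elim w g) (fun i => by cases i <;> simp [hLw, hLg]) hK
  set W : ℕ → GrpPt n m → ℝ := fun k => moll J (ns k) w with hW
  set G : ℕ → Fin (2*n) → GrpPt n m → ℝ := fun k j => moll J (ns k) (g j) with hG
  set V : ℕ → GrpPt n m → ℝ := fun k => moll J (ns k) (fun y => w y * u y) with hV
  set F : ℕ → Fin (2*n) → GrpPt n m → ℝ := fun k j => moll J (ns k) (fun y => g j y * u y) with hFdef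
  have hWlim : ∀ᵐ x ∂μ, Tendsto (fun k => W k x) atTop (nhds (w x)) := hlim.mono fun x hx => hx none
  have hGlim : ∀ j, ∀ᵐ x ∂μ, Tendsto (fun k => G k j x) atTop (nhds (g j x)) :=
    fun j => hlim.mono fun x hx => hx (some j)
  have hVlim : Tendsto (fun k => eLpNorm (V k - fun y => w y * u y) 2 μ) atTop (nhds 0) :=
    (tendsto_moll_eLpNorm J hv hK).comp hns.tendsto_atTop
  have hFlim : ∀ j, Tendsto (fun k => eLpNorm (F k j - fun y => g j y * u y) 2 μ) atTop (nhds 0) :=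
    fun j => (tendsto_moll_eLpNorm J (hF j) hK).comp hns.tendsto_atTop
  have sW : ∀ k, ContDiff ℝ (⊤ : ℕ∞) (W k) := fun k => contDiff_moll J _ hLw.locallyIntegrable
  have sG : ∀ k j, ContDiff ℝ (⊤ : ℕ∞) (G k j) := fun k j => contDiff_moll J _ (hLg j).locallyIntegrable
  have sV : ∀ k, ContDiff ℝ (⊤ : ℕ∞) (V k) := fun k => contDiff_moll J _ hv.locallyIntegrable
  have sF : ∀ k j, ContDiff ℝ (⊤ : ℕ∞) (F k j) := fun k j => contDiff_moll J _ (hF j).locallyIntegrable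
  -- bounds on the mollified coefficients
  have hlow : ∀ R : Set (GrpPt n m), IsCompact R → ∃ c : ℝ, 0 < c ∧ ∀ k, ∀ x ∈ R, c ≤ W k x := by
    intro R hR
    obtain ⟨C, hC⟩ := hw.inv_bdd _ (isCompact_fat J hR)
    refine ⟨(max C 1)⁻¹, by positivity, fun k x hx => le_moll J _ hLw.locallyIntegrable ?_ hx⟩
    filter_upwards [hC] with z hz hzR
    rw [inv_le_comm₀ (by positivity) (hw.pos z)]
    exact (hz hzR).trans (le_max_left _ _)
  have hWpos : ∀ k x, 0 < W k x := fun k x => by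
    obtain ⟨c, hc0, h⟩ := hlow {x} isCompact_singleton
    exact hc0.trans_le (h k x rfl)
  obtain ⟨c, hc0, hcW⟩ := hlow K hK
  have hGb : ∀ j, ∃ C : ℝ, ∀ k, ∀ x ∈ K, |G k j x| ≤ C := fun j => by
    obtain ⟨C, hC⟩ := hw.gbdd j _ (isCompact_fat J hK)
    exact ⟨C, fun k x hx => abs_moll_le J _ (hLg j).locallyIntegrable hC hx⟩
  obtain ⟨M, hM⟩ := hc.exists_bound_of_continuous hη.continuous
  have hXη := fun j => contDiff_XD J j hη
  have hXc := fun j => hasCompactSupport_XD J j hc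
  -- `r k = W_k^{-1/2}`
  set r : ℕ → GrpPt n m → ℝ := fun k x => (Real.sqrt (W k x))⁻¹ with hr
  set r' : GrpPt n m → ℝ := fun x => (Real.sqrt (w x))⁻¹ with hr'
  set s : ℝ := (Real.sqrt c)⁻¹ with hs
  have hs0 : 0 ≤ s := by positivity
  have hr0 : ∀ k x, 0 ≤ r k x := fun k x => by positivity
  have hrs : ∀ k, ∀ x ∈ K, r k x ≤ s := fun k x hx =>
    inv_anti₀ (Real.sqrt_pos.2 hc0) (Real.sqrt_le_sqrt (hcW k x hx))
  have hrc : ∀ k, Continuous (r k) := fun k =>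
    ((sW k).continuous.sqrt).inv₀ fun x => (Real.sqrt_pos.2 (hWpos k x)).ne'
  have hrm' : Measurable r' := hw.meas.sqrt.inv
  have hrlim : ∀ᵐ x ∂μ, Tendsto (fun k => r k x) atTop (nhds (r' x)) := by
    filter_upwards [hWlim] with x hx
    exact (hx.sqrt).inv₀ (Real.sqrt_pos.2 (hw.pos x)).ne'
  have hrW : ∀ k x, r k x ^ 2 = (W k x)⁻¹ := fun k x => by
    simp only [hr]
    rw [inv_pow, Real.sq_sqrt (hWpos k x).le]
  have hrw : ∀ x, r' x * w x = Real.sqrt (w x) := fun x => by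
    simp only [hr']
    rw [inv_mul_eq_div, Real.div_sqrt]
  -- the left-hand side
  have hη0 : ∀ x, x ∉ K → η x = 0 := fun x hx => image_eq_zero_of_notMem_tsupport hx
  have hXη0 : ∀ j x, x ∉ K → XD J j η x = 0 := fun j x hx => by
    by_contra h
    exact hx (tsupport_XD_subset J j η h)
  have hLlim : Tendsto (fun k => eLpNorm (fun x => (η x * r k x) * V k x) 2 μ) atTop
      (nhds (eLpNorm (fun x => (η x * r' x) * (w x * u x)) 2 μ)) := by
    have hmul := tendsto_eLpNorm_mul (μ := μ) (a := fun k x => η x * r k x)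
      (a' := fun x => η x * r' x) (C := M * s)
      (fun k => (hη.continuous.mul (hrc k)).aestronglyMeasurable)
      (hη.continuous.measurable.mul hrm').aestronglyMeasurable
      (fun k => (sV k).continuous.aestronglyMeasurable) (hv.2 K hK)
      (fun k => (ae_restrict_mem hK.measurableSet).mono fun x hx => by
        rw [abs_mul, abs_of_nonneg (hr0 k x)]
        exact mul_le_mul (hM x) (hrs k x hx) (hr0 k x) ((norm_nonneg _).trans (hM x)))
      (hrlim.mono fun x hx => hx.const_mul _) hVlim
    have mL : MemLp (fun x => (η x * r' x) * (w x * u x)) 2 μ := by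
      have e : (fun x => (η x * r' x) * (w x * u x)) = fun x => η x * (Real.sqrt (w x) * u x) := by
        funext x
        rw [← hrw x]
        ring
      rw [e]
      exact memLp_bdd_mul hη.continuous.aestronglyMeasurable hM (hu.restrict K)
    have cL : ∀ k, Continuous fun x => (η x * r k x) * V k x := fun k =>
      (hη.continuous.mul (hrc k)).mul (sV k).continuous
    exact tendsto_eLpNorm_of_sub (fun k => (cL k).aestronglyMeasurable) mL hmul
  -- the right-hand side
  have hRlim : ∀ j, Tendsto (fun k => eLpNorm (fun x =>
        (XD J j η x * r k x - 1/2 * η x * G k j x * r k x ^ 3) * V k x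
          + (1/2 * η x * r k x) * F k j x) 2 μ) atTop
      (nhds (eLpNorm (fun x => XD J j η x * (Real.sqrt (w x) * u x)) 2 μ)) := by
    intro j
    obtain ⟨C, hC⟩ := hGb j
    obtain ⟨M', hM'⟩ := (hXc j).exists_bound_of_continuous (hXη j).continuous
    have c1 : ∀ k, Continuous fun x => XD J j η x * r k x - 1/2 * η x * G k j x * r k x ^ 3 :=
      fun k => ((hXη j).continuous.mul (hrc k)).sub
        (((continuous_const.mul hη.continuous).mul (sG k j).continuous).mul ((hrc k).pow 3))
    have c2 : ∀ k, Continuous fun x => 1/2 * η x * r k x :=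
      fun k => (continuous_const.mul hη.continuous).mul (hrc k)
    have m1 : Measurable fun x => XD J j η x * r' x - 1/2 * η x * g j x * r' x ^ 3 :=
      ((hXη j).continuous.measurable.mul hrm').sub
        (((measurable_const.mul hη.continuous.measurable).mul (hw.gmeas j)).mul (hrm'.pow_const 3))
    have m2 : Measurable fun x => 1/2 * η x * r' x :=
      (measurable_const.mul hη.continuous.measurable).mul hrm'
    have t1 := tendsto_eLpNorm_mul (μ := μ) (C := M' * s + 1/2 * M * C * s ^ 3)
      (fun k => (c1 k).aestronglyMeasurable) m1.aestronglyMeasurable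
      (fun k => (sV k).continuous.aestronglyMeasurable) (hv.2 K hK)
      (fun k => (ae_restrict_mem hK.measurableSet).mono fun x hx => by
        have b1 := hM x
        have b2 := hM' x
        have b3 := hC k x hx
        have b4 := hrs k x hx
        have b5 := hr0 k x
        have b0 : 0 ≤ M := (norm_nonneg _).trans b1
        have b0' : 0 ≤ M' := (norm_nonneg _).trans b2
        have b0C : 0 ≤ C := (abs_nonneg _).trans b3
        rw [Real.norm_eq_abs] at b1 b2
        refine (abs_sub _ _).trans (add_le_add ?_ ?_)
        · rw [abs_mul, abs_of_nonneg b5]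
          gcongr
        · rw [abs_mul, abs_mul, abs_mul, abs_of_nonneg (pow_nonneg b5 3),
            abs_of_nonneg (by norm_num : (0 : ℝ) ≤ 1/2)]
          gcongr)
      ((hrlim.and (hGlim j)).mono fun x hx =>
        (hx.1.const_mul _).sub ((hx.2.const_mul _).mul (hx.1.pow 3))) hVlim
    have t2 := tendsto_eLpNorm_mul (μ := μ) (C := 1/2 * M * s)
      (fun k => (c2 k).aestronglyMeasurable) m2.aestronglyMeasurable
      (fun k => (sF k j).continuous.aestronglyMeasurable) ((hF j).2 K hK)
      (fun k => (ae_restrict_mem hK.measurableSet).mono fun x hx => by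
        have b1 := hM x
        have b0 : 0 ≤ M := (norm_nonneg _).trans b1
        rw [Real.norm_eq_abs] at b1
        rw [abs_mul, abs_mul, abs_of_nonneg (hr0 k x), abs_of_nonneg (by norm_num : (0 : ℝ) ≤ 1/2)]
        have := hrs k x hx
        have := hr0 k x
        gcongr)
      (hrlim.mono fun x hx => hx.const_mul _) (hFlim j)
    have e : ∀ x, (XD J j η x * r' x - 1/2 * η x * g j x * r' x ^ 3) * (w x * u x)
        + (1/2 * η x * r' x) * (g j x * u x) = XD J j η x * (Real.sqrt (w x) * u x) := by
      intro x
      have h1 : r' x ^ 2 * w x = 1 := by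
        simp only [hr']
        rw [inv_pow, Real.sq_sqrt (hw.pos x).le, inv_mul_cancel₀ (hw.pos x).ne']
      rw [← hrw x]
      linear_combination (-1/2 * η x * g j x * u x * r' x) * h1
    have mR : MemLp (fun x => XD J j η x * (Real.sqrt (w x) * u x)) 2 μ :=
      memLp_bdd_mul (hXη j).continuous.aestronglyMeasurable hM' (hu.restrict K)
    have cR1 : ∀ k, Continuous fun x =>
      (XD J j η x * r k x - 1/2 * η x * G k j x * r k x ^ 3) * V k x :=
      fun k => (c1 k).mul (sV k).continuous
    have cR2 : ∀ k, Continuous fun x => (1/2 * η x * r k x) * F k j x :=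
      fun k => (c2 k).mul (sF k j).continuous
    exact tendsto_eLpNorm_of_sub (fun k => ((cR1 k).add (cR2 k)).aestronglyMeasurable) mR
      (tendsto_eLpNorm_sub_add (fun k => (cR1 k).aestronglyMeasurable)
        (fun k => (cR2 k).aestronglyMeasurable) (m1.mul hv.1).aestronglyMeasurable
        (m2.mul (hF j).1).aestronglyMeasurable e t1 t2)
  -- the estimate for the mollified data
  have hineq : ∀ k, eLpNorm (fun x => (η x * r k x) * V k x) 2 μ ^ 2
      ≤ ∑ j, eLpNorm (fun x =>
        (XD J j η x * r k x - 1/2 * η x * G k j x * r k x ^ 3) * V k x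
          + (1/2 * η x * r k x) * F k j x) 2 μ ^ 2 := by
    intro k
    have h := smooth_energy_norm (J := J) (r := r k) (sV k) (sW k) hη (sF k) hc (hWpos k) (hrW k)
      (hrc k) (fun j => XD_moll_weak J (ns k) hLw.locallyIntegrable j (hw.weak j))
      (moll_equation J (ns k) hv.locallyIntegrable (fun j => (hF j).locallyIntegrable) heq)
    have eL : eLpNorm (fun x => (η x * r k x) * V k x) 2 μ
        = eLpNorm (fun x => (η x * r k x) * V k x) 2 volume :=
      eLpNorm_restrict_eq_of_support_subset fun x hx => by
        by_contra h
        exact hx (by simp [hη0 x h])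
    rw [eL]
    refine h.trans (le_of_eq (Finset.sum_congr rfl fun j _ => ?_))
    congr 1
    refine (eLpNorm_restrict_eq_of_support_subset fun x hx => ?_).symm
    by_contra h
    exact hx (by simp [hη0 x h, hXη0 j x h])
  have hlimits := le_of_tendsto_of_tendsto' (ENNReal.Tendsto.pow (n := 2) hLlim)
    (tendsto_finsetSum (Finset.univ) fun j _ => ENNReal.Tendsto.pow (n := 2) (hRlim j)) hineq
  have eL : eLpNorm (fun x => (η x * r' x) * (w x * u x)) 2 μ
      = eLpNorm (fun x => η x * (Real.sqrt (w x) * u x)) 2 volume := by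
    have : (fun x => (η x * r' x) * (w x * u x)) = fun x => η x * (Real.sqrt (w x) * u x) := by
      funext x
      rw [← hrw x]
      ring
    rw [this]
    exact eLpNorm_restrict_eq_of_support_subset fun x hx => by
      by_contra h
      exact hx (by simp [hη0 x h])
  have eR : ∀ j, eLpNorm (fun x => XD J j η x * (Real.sqrt (w x) * u x)) 2 μ
      = eLpNorm (fun x => XD J j η x * (Real.sqrt (w x) * u x)) 2 volume := fun j =>
    eLpNorm_restrict_eq_of_support_subset fun x hx => by
      by_contra h
      exact hx (by simp [hXη0 j x h])
  rw [eL] at hlimits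
  simp only [eR] at hlimits
  exact hlimits
end energy

/-! ### Vanishing of weak solutions in the weighted space -/

section core
variable {n m : ℕ} {J : Fin m → Matrix (Fin (2*n)) (Fin (2*n)) ℝ}

/-- The dilation `(x, t) ↦ (s x, s² t)` of the group. -/
def dil (n m : ℕ) (s : ℝ) : GrpPt n m →L[ℝ] GrpPt n m :=
  (s • ContinuousLinearMap.fst ℝ _ _).prod (s ^ 2 • ContinuousLinearMap.snd ℝ _ _)

theorem dil_dil_inv {s : ℝ} (hs : s ≠ 0) (p : GrpPt n m) : dil n m s⁻¹ (dil n m s p) = p := by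
  ext i <;> simp [dil, hs]

/-- Horizontal fields are homogeneous of degree one. -/
theorem XD_dil (j : Fin (2*n)) {f : GrpPt n m → ℝ} (hf : ContDiff ℝ (⊤ : ℕ∞) f) (s : ℝ)
    (p : GrpPt n m) : XD J j (fun q => f (dil n m s q)) p = s * XD J j f (dil n m s p) := by
  have h1 : HasFDerivAt (fun q => f (dil n m s q)) ((fderiv ℝ f (dil n m s p)).comp (dil n m s)) p :=
    (hf.differentiable (by simp) _).hasFDerivAt.comp p (dil n m s).hasFDerivAt
  have h2 : dil n m s (Xvec J j p) = s • Xvec J j (dil n m s p) := by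
    ext i
    · simp [dil, Xvec]
    · simp [dil, Xvec, Matrix.mulVec_smul]
      ring
  rw [XD_eq, XD_eq, h1.fderiv, ContinuousLinearMap.comp_apply, h2, map_smul, smul_eq_mul]

/-- Dilated cut-off functions exhausting the group. -/
def cut (n m N : ℕ) (p : GrpPt n m) : ℝ := bmp n m 0 (dil n m (1 / ((N : ℝ) + 1)) p)

theorem contDiff_cut (N : ℕ) : ContDiff ℝ (⊤ : ℕ∞) (cut n m N) :=
  (bmp n m 0).contDiff.comp (dil n m _).contDiff

theorem hasCompactSupport_cut (N : ℕ) : HasCompactSupport (cut n m N) := by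
  have hs : (1 / ((N : ℝ) + 1)) ≠ 0 := by positivity
  refine HasCompactSupport.intro (K := dil n m (1 / ((N : ℝ) + 1))⁻¹ '' tsupport (bmp n m 0))
    ((bmp n m 0).hasCompactSupport.isCompact.image (dil n m _).continuous) fun p hp => ?_
  by_contra h
  exact hp ⟨dil n m (1 / ((N : ℝ) + 1)) p, subset_tsupport _ h, dil_dil_inv hs p⟩

theorem tendsto_cut (p : GrpPt n m) : Tendsto (fun N => cut n m N p) atTop (nhds 1) := by
  have h0 : Tendsto (fun N : ℕ => 1 / ((N : ℝ) + 1)) atTop (nhds 0) :=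
    tendsto_one_div_add_atTop_nhds_zero_nat
  have hc : Continuous fun s : ℝ => dil n m s p := by
    simp only [dil, ContinuousLinearMap.prod_apply, smul_apply]
    fun_prop
  have h1 := (hc.tendsto 0).comp h0
  have h2 := ((bmp n m 0).continuous.tendsto _).comp h1
  have h3 : bmp n m 0 (dil n m 0 p) = 1 := by
    have : dil n m 0 p = 0 := by simp [dil]
    rw [this]
    exact (bmp n m 0).one_of_mem_closedBall (Metric.mem_closedBall_self (bmp n m 0).rIn_pos.le)
  rw [h3] at h2
  exact h2

/-- A function `u ∈ L²(w)` with `L u - (∇w/w)·∇u + u = 0` weakly vanishes: the energy estimate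
with the dilated cut-offs bounds the norm of `u` on large balls by `O(1/N)` times its norm. -/
theorem ae_eq_zero_of_weak {w : GrpPt n m → ℝ} {g : Fin (2*n) → GrpPt n m → ℝ} (hw : IsWt J w g)
    {u : GrpPt n m → ℝ} (hum : Measurable u)
    (hu : MemLp (fun x => Real.sqrt (w x) * u x) 2 volume)
    (heq : ∀ φ : GrpPt n m → ℝ, ContDiff ℝ (⊤ : ℕ∞) φ → HasCompactSupport φ →
      ∫ y, ((w y * u y) * LSub J φ y - ∑ j, (g j y * u y) * XD J j φ y + (w y * u y) * φ y) = 0) :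
    u =ᵐ[volume] 0 := by
  have hsm : Measurable fun x => Real.sqrt (w x) := hw.meas.sqrt
  have hsl : LocL2 fun x => Real.sqrt (w x) * u x := ⟨hsm.mul hum, fun K _ => hu.restrict K⟩
  have hsi : ∀ K : Set (GrpPt n m), IsCompact K → ∃ C : ℝ, ∀ᵐ y, y ∈ K → (Real.sqrt (w y))⁻¹ ≤ C := by
    intro K hK
    obtain ⟨C, hC⟩ := hw.inv_bdd K hK
    refine ⟨Real.sqrt C, hC.mono fun y hy hyK => ?_⟩
    rw [← Real.sqrt_inv]
    exact Real.sqrt_le_sqrt (hy hyK)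
  have hv : LocL2 fun y => w y * u y := by
    have h := locL2_mul_bdd hsm (fun K hK => by
      obtain ⟨C, hC⟩ := hw.bdd K hK
      refine ⟨Real.sqrt C, hC.mono fun y hy hyK => ?_⟩
      rw [abs_of_nonneg (Real.sqrt_nonneg _)]
      exact Real.sqrt_le_sqrt (hy hyK)) hsl
    convert h using 2 with y
    rw [← mul_assoc, Real.mul_self_sqrt (hw.pos y).le]
  have hF : ∀ j, LocL2 fun y => g j y * u y := by
    intro j
    have h := locL2_mul_bdd ((hw.gmeas j).mul hsm.inv) (fun K hK => by
      obtain ⟨C, hC⟩ := hsi K hK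
      obtain ⟨C', hC'⟩ := hw.gbdd j K hK
      refine ⟨C' * C, ?_⟩
      filter_upwards [hC, hC'] with y hy hy' hyK
      have h0 : 0 ≤ (Real.sqrt (w y))⁻¹ := by positivity
      simp only [Pi.mul_apply, Pi.inv_apply, abs_mul]
      rw [abs_of_nonneg h0]
      exact mul_le_mul (hy' hyK) (hy hyK) h0 ((abs_nonneg _).trans (hy' hyK))) hsl
    convert h using 2 with y
    have h0 : Real.sqrt (w y) ≠ 0 := (Real.sqrt_pos.2 (hw.pos y)).ne'
    simp only [Pi.mul_apply, Pi.inv_apply]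
    field_simp
  set f : GrpPt n m → ℝ := fun x => Real.sqrt (w x) * u x with hf
  have hen : ∀ N, eLpNorm (fun x => cut n m N x * f x) 2 volume ^ 2
      ≤ ∑ j, eLpNorm (fun x => XD J j (cut n m N) x * f x) 2 volume ^ 2 := fun N =>
    weak_energy hw hu hv hF heq (contDiff_cut N) (hasCompactSupport_cut N)
  have hχ : ContDiff ℝ (⊤ : ℕ∞) (bmp n m 0) := (bmp n m 0).contDiff
  have hR : ∀ j, Tendsto (fun N => eLpNorm (fun x => XD J j (cut n m N) x * f x) 2 volume) atTop
      (nhds 0) := by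
    intro j
    obtain ⟨C, hC⟩ := (hasCompactSupport_XD J j (bmp n m 0).hasCompactSupport).exists_bound_of_continuous
      (contDiff_XD J j hχ).continuous
    have hb : ∀ N x, ‖XD J j (cut n m N) x * f x‖ ≤ (1 / ((N : ℝ) + 1) * C) * ‖f x‖ := by
      intro N x
      have h1 : XD J j (cut n m N) x = _ := XD_dil j hχ (1 / ((N : ℝ) + 1)) x
      rw [norm_mul, h1, norm_mul, Real.norm_of_nonneg (by positivity : 0 ≤ 1 / ((N : ℝ) + 1))]
      gcongr
      exact hC _
    have h2 : Tendsto (fun N : ℕ => ENNReal.ofReal (1 / ((N : ℝ) + 1) * C) * eLpNorm f 2 volume)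
        atTop (nhds 0) := by
      have h3 : Tendsto (fun N : ℕ => 1 / ((N : ℝ) + 1) * C) atTop (nhds 0) := by
        simpa using (tendsto_one_div_add_atTop_nhds_zero_nat (𝕜 := ℝ)).mul_const C
      have h4 := ENNReal.Tendsto.mul_const (ENNReal.tendsto_ofReal h3) (Or.inr hu.2.ne)
      simpa using h4
    exact tendsto_of_tendsto_of_tendsto_of_le_of_le tendsto_const_nhds h2 (fun _ => zero_le)
      fun N => eLpNorm_le_mul_eLpNorm_of_ae_le_mul (Eventually.of_forall (hb N)) 2
  have hL : Tendsto (fun N => eLpNorm (fun x => cut n m N x * f x) 2 volume) atTop (nhds 0) := by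
    have h1 : Tendsto (fun N => ∑ j, eLpNorm (fun x => XD J j (cut n m N) x * f x) 2 volume ^ 2)
        atTop (nhds 0) := by
      have := tendsto_finsetSum Finset.univ fun j _ => ENNReal.Tendsto.pow (n := 2) (hR j)
      simpa using this
    rw [tendsto_eLpNorm_two_iff]
    simp only [← eLpNorm_two_sq]
    exact tendsto_of_tendsto_of_tendsto_of_le_of_le tendsto_const_nhds h1 (fun _ => zero_le) hen
  have h0 := Lp.eLpNorm_lim_le_liminf_eLpNorm (p := 2) (μ := (volume : Measure (GrpPt n m)))
    (f := fun N x => cut n m N x * f x)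
    (fun N => ((contDiff_cut N).continuous.measurable.mul hsl.1).aestronglyMeasurable) f
    (Eventually.of_forall fun x => by simpa using (tendsto_cut x).mul_const (f x))
  rw [hL.liminf_eq] at h0
  have h1 := (eLpNorm_eq_zero_iff hsl.1.aestronglyMeasurable two_ne_zero).1 (le_antisymm h0 zero_le)
  filter_upwards [h1] with x hx
  exact (mul_eq_zero.1 hx).resolve_left (Real.sqrt_pos.2 (hw.pos x)).ne'
end core

/-! ### The Dirichlet form and the weighted measure -/

section weighted
variable {n m : ℕ} {J : Fin m → Matrix (Fin (2*n)) (Fin (2*n)) ℝ} {w : GrpPt n m → ℝ}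
  {g : Fin (2*n) → GrpPt n m → ℝ}

theorem IsWt.ae_iff (hw : IsWt J w g) {p : GrpPt n m → Prop} :
    (∀ᵐ x ∂(wMeasure w), p x) ↔ ∀ᵐ x, p x := by
  rw [wMeasure, ae_withDensity_iff hw.meas.ennreal_ofReal]
  refine eventually_congr (Eventually.of_forall fun x => ?_)
  simp [hw.pos x]

theorem IsWt.integral_eq (hw : IsWt J w g) {E : Type*} [NormedAddCommGroup E] [NormedSpace ℝ E]
    (f : GrpPt n m → E) : ∫ x, f x ∂(wMeasure w) = ∫ x, w x • f x := by
  rw [wMeasure, integral_withDensity_eq_integral_toReal_smul hw.meas.ennreal_ofReal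
    (Eventually.of_forall fun x => ENNReal.ofReal_lt_top)]
  refine integral_congr_ae (Eventually.of_forall fun x => ?_)
  simp only [ENNReal.toReal_ofReal (hw.pos x).le]

theorem IsWt.isLocallyFinite (hw : IsWt J w g) : IsLocallyFiniteMeasure (wMeasure w) := by
  refine ⟨fun x => ⟨Metric.closedBall x 1, Metric.closedBall_mem_nhds x one_pos, ?_⟩⟩
  obtain ⟨C, hC⟩ := hw.bdd _ (isCompact_closedBall x 1)
  rw [wMeasure, withDensity_apply _ Metric.isClosed_closedBall.measurableSet]
  have h : ∫⁻ y in Metric.closedBall x 1, ENNReal.ofReal (w y)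
      ≤ ∫⁻ _ in Metric.closedBall x 1, ENNReal.ofReal C := by
    refine lintegral_mono_ae ?_
    filter_upwards [(ae_restrict_iff' Metric.isClosed_closedBall.measurableSet).2 hC] with y hy
    exact ENNReal.ofReal_le_ofReal hy
  refine h.trans_lt ?_
  rw [setLIntegral_const]
  exact ENNReal.mul_lt_top ENNReal.ofReal_lt_top (isCompact_closedBall x 1).measure_lt_top

theorem IsWt.locL2 (hw : IsWt J w g) : LocL2 w := locL2_of_bdd hw.meas fun K hK => by
  obtain ⟨C, hC⟩ := hw.bdd K hK
  exact ⟨C, hC.mono fun y hy hyK => by rw [abs_of_pos (hw.pos y)]; exact hy hyK⟩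

theorem LocL2.integrable_smul {f : GrpPt n m → ℝ} (hf : LocL2 f) {A : GrpPt n m → ℂ}
    (hA : Continuous A) (hc : HasCompactSupport A) : Integrable (fun y => f y • A y) :=
  hf.locallyIntegrable.integrable_smul_right_of_hasCompactSupport hA hc

theorem IsWt.locL2_g (hw : IsWt J w g) (j : Fin (2*n)) : LocL2 (g j) :=
  locL2_of_bdd (hw.gmeas j) (hw.gbdd j)

/-- The weak gradient identity for complex test functions. -/
theorem IsWt.weak_complex (hw : IsWt J w g) (j : Fin (2*n)) {A : GrpPt n m → ℂ}
    (hA : ContDiff ℝ (⊤ : ℕ∞) A) (hc : HasCompactSupport A) :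
    ∫ y, (w y • XD J j A y + g j y • A y) = 0 := by
  have hi1 := hw.locL2.integrable_smul (contDiff_XD J j hA).continuous (hasCompactSupport_XD J j hc)
  have hi2 := (hw.locL2_g j).integrable_smul hA.continuous hc
  have key : ∀ L : ℂ →L[ℝ] ℝ, L (∫ y, (w y • XD J j A y + g j y • A y)) = 0 := by
    intro L
    have hLs : ContDiff ℝ (⊤ : ℕ∞) fun y => L (A y) := L.contDiff.comp hA
    have hLc : HasCompactSupport fun y => L (A y) := hc.comp_left (map_zero L)
    have h := hw.weak j _ hLs hLc
    have e : ∀ y, XD J j (fun y => L (A y)) y = L (XD J j A y) := fun y =>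
      XD_clm J j L (hA.differentiable (by simp) y)
    simp only [e] at h
    rw [integral_add hi1 hi2, map_add, ← L.integral_comp_comm hi1, ← L.integral_comp_comm hi2]
    simp only [map_smul, smul_eq_mul]
    linarith
  exact Complex.ext (key Complex.reCLM) (key Complex.imCLM)

/-- The Dirichlet form of the weight represents the weighted sub-Laplacian. -/
theorem IsWt.form_eq (hw : IsWt J w g) {φ ψ : GrpPt n m → ℂ}
    (hφ : ContDiff ℝ (⊤ : ℕ∞) φ) (hφc : HasCompactSupport φ)
    (hψ : ContDiff ℝ (⊤ : ℕ∞) ψ) :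
    ∫ y, inner ℂ (LSub J φ y - ∑ j, (g j y / w y) • XD J j φ y) (ψ y) ∂(wMeasure w)
      = ∫ y, ∑ j, w y • inner ℂ (XD J j φ y) (XD J j ψ y) := by
  rw [hw.integral_eq]
  set A : Fin (2*n) → GrpPt n m → ℂ := fun j y => Complex.conjCLE (XD J j φ y) * ψ y with hA
  have hXs := fun j => contDiff_XD J j hφ
  have hCs : ∀ j, ContDiff ℝ (⊤ : ℕ∞) fun y => Complex.conjCLE (XD J j φ y) := fun j =>
    Complex.conjCLE.contDiff.comp (hXs j)
  have hCc : ∀ j, HasCompactSupport fun y => Complex.conjCLE (XD J j φ y) := fun j =>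
    (hasCompactSupport_XD J j hφc).comp_left (map_zero Complex.conjCLE)
  have hAs : ∀ j, ContDiff ℝ (⊤ : ℕ∞) (A j) := fun j => (hCs j).mul hψ
  have hAc : ∀ j, HasCompactSupport (A j) := fun j => (hCc j).mul_right
  have hXA : ∀ j y, XD J j (A j) y = Complex.conjCLE (XD J j φ y) * XD J j ψ y
      + Complex.conjCLE (XD J j (XD J j φ) y) * ψ y := by
    intro j y
    rw [hA, XD_mul J j ((hCs j).differentiable (by simp) y) (hψ.differentiable (by simp) y)]
    congr 2
    exact XD_clm J j (Complex.conjCLE : ℂ →L[ℝ] ℂ) ((hXs j).differentiable (by simp) y)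
  have hi : ∀ j, Integrable fun y => w y • XD J j (A j) y + g j y • A j y := fun j =>
    (hw.locL2.integrable_smul (contDiff_XD J j (hAs j)).continuous
      (hasCompactSupport_XD J j (hAc j))).add ((hw.locL2_g j).integrable_smul (hAs j).continuous (hAc j))
  have hi2 : ∀ j, Integrable fun y => w y • (Complex.conjCLE (XD J j φ y) * XD J j ψ y) := fun j =>
    hw.locL2.integrable_smul ((hCs j).continuous.mul (contDiff_XD J j hψ).continuous)
      (hCc j).mul_right
  have e1 : ∀ y, w y • inner ℂ (LSub J φ y - ∑ j, (g j y / w y) • XD J j φ y) (ψ y)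
      = ∑ j, w y • inner ℂ (XD J j φ y) (XD J j ψ y)
        - ∑ j, (w y • XD J j (A j) y + g j y • A j y) := by
    intro y
    rw [← Finset.sum_sub_distrib]
    have h0 : (w y : ℂ) ≠ 0 := by exact_mod_cast (hw.pos y).ne'
    simp only [hXA]
    simp only [hA, LSub, RCLike.inner_apply, map_sub, map_neg, map_sum, Complex.real_smul,
      map_mul, Complex.conj_ofReal, Complex.conjCLE_apply, ← Finset.sum_neg_distrib,
      ← Finset.sum_sub_distrib, Finset.mul_sum, Complex.ofReal_div, map_div₀]
    refine Finset.sum_congr rfl fun j _ => ?_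
    field_simp
    ring
  simp only [e1]
  have e2 : ∀ j y, w y • inner ℂ (XD J j φ y) (XD J j ψ y)
      = w y • (Complex.conjCLE (XD J j φ y) * XD J j ψ y) := fun j y => by
    rw [RCLike.inner_apply, mul_comm]
    rfl
  rw [integral_sub, integral_finsetSum _ fun j _ => hi j,
    Finset.sum_eq_zero fun j _ => hw.weak_complex j (hAs j) (hAc j), sub_zero]
  · simp only [e2]
    exact integrable_finsetSum _ fun j _ => hi2 j
  · exact integrable_finsetSum _ fun j _ => hi j

theorem IsWt.memLp_sqrt (hw : IsWt J w g) {u : GrpPt n m → ℝ} (hum : Measurable u)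
    (hu : MemLp u 2 (wMeasure w)) : MemLp (fun x => Real.sqrt (w x) * u x) 2 volume := by
  refine ⟨(hw.meas.sqrt.mul hum).aestronglyMeasurable, ?_⟩
  have h1 : eLpNorm (fun x => Real.sqrt (w x) * u x) 2 volume ^ 2 = eLpNorm u 2 (wMeasure w) ^ 2 := by
    rw [eLpNorm_two_sq, eLpNorm_two_sq, wMeasure,
      lintegral_withDensity_eq_lintegral_mul _ hw.meas.ennreal_ofReal (hum.enorm.pow_const 2)]
    refine lintegral_congr fun x => ?_
    simp only [Pi.mul_apply]
    rw [enorm_mul, mul_pow, Real.enorm_eq_ofReal (Real.sqrt_nonneg _),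
      ← ENNReal.ofReal_pow (Real.sqrt_nonneg _), Real.sq_sqrt (hw.pos x).le]
  have h2 : eLpNorm (fun x => Real.sqrt (w x) * u x) 2 volume ^ 2 < ⊤ := by
    rw [h1]
    exact ENNReal.pow_lt_top hu.2
  exact (ENNReal.pow_lt_top_iff.1 h2).resolve_right two_ne_zero

/-- `ae_eq_zero_of_weak` with the equation written against the weighted measure. -/
theorem IsWt.ae_eq_zero (hw : IsWt J w g) {u : GrpPt n m → ℝ} (hum : Measurable u)
    (hu : MemLp u 2 (wMeasure w))
    (heq : ∀ φ : GrpPt n m → ℝ, ContDiff ℝ (⊤ : ℕ∞) φ → HasCompactSupport φ →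
      ∫ y, u y * (LSub J φ y - ∑ j, (g j y / w y) * XD J j φ y + φ y) ∂(wMeasure w) = 0) :
    ∀ᵐ x ∂(wMeasure w), u x = 0 := by
  rw [hw.ae_iff]
  refine ae_eq_zero_of_weak hw hum (hw.memLp_sqrt hum hu) fun φ hφ hc => ?_
  rw [← heq φ hφ hc, hw.integral_eq]
  refine integral_congr_ae (Eventually.of_forall fun y => ?_)
  have h0 := (hw.pos y).ne'
  have e : ∑ j, g j y * u y * XD J j φ y = w y * (u y * ∑ j, g j y / w y * XD J j φ y) := by
    rw [Finset.mul_sum, Finset.mul_sum]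
    refine Finset.sum_congr rfl fun j _ => ?_
    field_simp
  simp only [smul_eq_mul]
  rw [e]
  ring

theorem XD_ofReal (j : Fin (2*n)) {φ : GrpPt n m → ℝ} (hφ : ContDiff ℝ (⊤ : ℕ∞) φ) :
    XD J j (fun y => (φ y : ℂ)) = fun y => ((XD J j φ y : ℝ) : ℂ) :=
  funext fun y => XD_clm J j Complex.ofRealCLM (hφ.differentiable (by simp) y)

theorem LSub_ofReal {φ : GrpPt n m → ℝ} (hφ : ContDiff ℝ (⊤ : ℕ∞) φ) (y : GrpPt n m) :
    LSub J (fun y => (φ y : ℂ)) y = ((LSub J φ y : ℝ) : ℂ) := by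
  have : ∀ j, XD J j (XD J j (fun y => (φ y : ℂ))) y = ((XD J j (XD J j φ) y : ℝ) : ℂ) := fun j => by
    rw [XD_ofReal j hφ, XD_ofReal j (contDiff_XD J j hφ)]
  simp only [LSub, this]
  push_cast
  rfl

end weighted

/-! ### Essential self-adjointness -/

/-- If `w` is an admissible weight with locally essentially bounded horizontal gradient and
with weak sub-Laplacian in `L^Q_loc`, then the weighted sub-Laplacian
`φ ↦ L φ - (∇_H w / w) · ∇_H φ` with domain the (classes of) smooth compactly supported
functions is essentially self-adjoint on `L²(G, w dy)`: its adjoint is self-adjoint. -/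
theorem weighted_subLaplacian_essentially_selfAdjoint_of_LQ (n m : ℕ) (hn : 1 ≤ n) (hm : 1 ≤ m)
    (J : Fin m → Matrix (Fin (2*n)) (Fin (2*n)) ℝ)
    (hskew : ∀ k, (J k).transpose = -(J k))
    (hMet : ∀ t : Fin m → ℝ, t ≠ 0 → IsUnit (∑ k, t k • J k))
    -- `w` is an admissible weight:
    (w : GrpPt n m → ℝ) (hwmeas : Measurable w) (hwpos : ∀ y, 0 < w y)
    (hwloc : ∀ K : Set (GrpPt n m), IsCompact K →
      ∃ C : ℝ, ∀ᵐ y ∂(volume : Measure (GrpPt n m)), y ∈ K → w y ≤ C)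
    (hwinvloc : ∀ K : Set (GrpPt n m), IsCompact K →
      ∃ C : ℝ, ∀ᵐ y ∂(volume : Measure (GrpPt n m)), y ∈ K → (w y)⁻¹ ≤ C)
    -- weak horizontal gradient of `w`, in `L²_loc`:
    (g : Fin (2*n) → GrpPt n m → ℝ) (hgmeas : ∀ j, Measurable (g j))
    (hgL2 : ∀ j, ∀ K : Set (GrpPt n m), IsCompact K →
      MeasureTheory.IntegrableOn (fun y => (g j y)^2) K volume)
    (hgweak : ∀ j, ∀ φ : GrpPt n m → ℝ, ContDiff ℝ (⊤ : ℕ∞) φ → HasCompactSupport φ →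
      ∫ y, w y * XD J j φ y = -∫ y, g j y * φ y)
    -- `∇_H w` is locally essentially bounded:
    (hgbdd : ∀ j, ∀ K : Set (GrpPt n m), IsCompact K →
      ∃ C : ℝ, ∀ᵐ y ∂(volume : Measure (GrpPt n m)), y ∈ K → |g j y| ≤ C)
    -- weak sub-Laplacian of `w`, in `L^Q_loc` with `Q = 2n + 2m`:
    (Lw : GrpPt n m → ℝ) (hLwmeas : Measurable Lw)
    (hLwQ : ∀ K : Set (GrpPt n m), IsCompact K →
      MeasureTheory.IntegrableOn (fun y => |Lw y| ^ (2*n + 2*m)) K volume)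
    (hLwweak : ∀ φ : GrpPt n m → ℝ, ContDiff ℝ (⊤ : ℕ∞) φ → HasCompactSupport φ →
      ∫ y, w y * LSub J φ y = ∫ y, Lw y * φ y)
    -- the weighted sub-Laplacian with domain `C_c^∞`:
    (T : (MeasureTheory.Lp ℂ 2 (wMeasure w)) →ₗ.[ℂ] (MeasureTheory.Lp ℂ 2 (wMeasure w)))
    (hdom : ∀ u : MeasureTheory.Lp ℂ 2 (wMeasure w),
      u ∈ T.domain ↔ ∃ φ : GrpPt n m → ℂ, ContDiff ℝ (⊤ : ℕ∞) φ ∧ HasCompactSupport φ ∧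
        (u : GrpPt n m → ℂ) =ᵐ[wMeasure w] φ)
    (haction : ∀ (u : T.domain) (φ : GrpPt n m → ℂ),
      ContDiff ℝ (⊤ : ℕ∞) φ → HasCompactSupport φ →
      ((u : MeasureTheory.Lp ℂ 2 (wMeasure w)) : GrpPt n m → ℂ) =ᵐ[wMeasure w] φ →
      (T u : GrpPt n m → ℂ)
        =ᵐ[wMeasure w] fun y => LSub J φ y - ∑ j, (g j y / w y) • XD J j φ y) :
    IsSelfAdjoint T.adjoint := by
  have hw : IsWt J w g := ⟨hwmeas, hwpos, hwloc, hwinvloc, hgmeas, hgweak, hgbdd⟩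
  have := hw.isLocallyFinite
  -- the class of a test function, as an element of the domain
  have cls : ∀ φ : GrpPt n m → ℂ, ContDiff ℝ (⊤ : ℕ∞) φ → HasCompactSupport φ →
      ∃ x : T.domain, (((x : Lp ℂ 2 (wMeasure w)) : GrpPt n m → ℂ) =ᵐ[wMeasure w] φ) := by
    intro φ hφ hc
    have h : MemLp φ 2 (wMeasure w) := hφ.continuous.memLp_of_hasCompactSupport hc
    exact ⟨⟨h.toLp φ, (hdom _).2 ⟨φ, hφ, hc, h.coeFn_toLp⟩⟩, h.coeFn_toLp⟩
  have form : ∀ (x y : T.domain) (φ ψ : GrpPt n m → ℂ), ContDiff ℝ (⊤ : ℕ∞) φ →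
      HasCompactSupport φ → ContDiff ℝ (⊤ : ℕ∞) ψ →
      (((x : Lp ℂ 2 (wMeasure w)) : GrpPt n m → ℂ) =ᵐ[wMeasure w] φ) →
      (((y : Lp ℂ 2 (wMeasure w)) : GrpPt n m → ℂ) =ᵐ[wMeasure w] ψ) →
      inner ℂ (T x) (y : Lp ℂ 2 (wMeasure w))
        = ∫ p, ∑ j, w p • inner ℂ (XD J j φ p) (XD J j ψ p) := by
    intro x y φ ψ hφ hφc hψ hx hy
    rw [L2.inner_def, ← hw.form_eq hφ hφc hψ]
    refine integral_congr_ae ?_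
    filter_upwards [haction x φ hφ hφc hx, hy] with p h1 h2
    rw [h1, h2]
  refine isSelfAdjoint_adjoint_of_ker T ?_ ?_ ?_ ?_
  · rw [Submodule.dense_iff_topologicalClosure_eq_top, Submodule.topologicalClosure_eq_top_iff,
      Submodule.eq_bot_iff]
    intro u hu
    rw [Submodule.mem_orthogonal] at hu
    rw [Lp.eq_zero_iff_ae_eq_zero]
    refine ae_eq_zero_of_integral_contDiff_smul_eq_zero
      ((Lp.memLp u).locallyIntegrable one_le_two) fun φ hφ hc => ?_
    have hφ' : ContDiff ℝ (⊤ : ℕ∞) fun y => (φ y : ℂ) := Complex.ofRealCLM.contDiff.comp hφ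
    have hc' : HasCompactSupport fun y => (φ y : ℂ) := hc.comp_left Complex.ofReal_zero
    obtain ⟨x, hx⟩ := cls _ hφ' hc'
    have h := hu x x.2
    rw [L2.inner_def] at h
    rw [← h]
    refine integral_congr_ae ?_
    filter_upwards [hx] with p hp
    rw [hp, RCLike.inner_apply, Complex.conj_ofReal, Complex.real_smul, mul_comm]
  · intro x y
    obtain ⟨φ, hφ, hφc, hx⟩ := (hdom x).1 x.2
    obtain ⟨ψ, hψ, hψc, hy⟩ := (hdom y).1 y.2
    rw [form x y φ ψ hφ hφc hψ hx hy, ← inner_conj_symm, form y x ψ φ hψ hψc hφ hy hx,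
      ← integral_conj]
    refine integral_congr_ae (Eventually.of_forall fun p => ?_)
    simp only [map_sum, Complex.real_smul, map_mul, Complex.conj_ofReal, inner_conj_symm]
  · intro x
    obtain ⟨φ, hφ, hφc, hx⟩ := (hdom x).1 x.2
    rw [form x x φ φ hφ hφc hφ hx hx]
    have e : ∀ p, ∑ j, w p • inner ℂ (XD J j φ p) (XD J j φ p)
        = ((∑ j, w p * ‖XD J j φ p‖ ^ 2 : ℝ) : ℂ) := by
      intro p
      simp only [inner_self_eq_norm_sq_to_K, Complex.real_smul]
      push_cast
      rfl
    simp only [e]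
    rw [integral_complex_ofReal, Complex.ofReal_re]
    exact integral_nonneg fun p => Finset.sum_nonneg fun j _ =>
      mul_nonneg (hwpos p).le (sq_nonneg _)
  · intro u hu
    -- the real and the imaginary part of `u` solve the same equation against real test functions
    have key : ∀ φ : GrpPt n m → ℝ, ContDiff ℝ (⊤ : ℕ∞) φ → HasCompactSupport φ →
        ∃ ψ : GrpPt n m → ℝ,
          (ψ = fun y => LSub J φ y - ∑ j, (g j y / w y) * XD J j φ y + φ y) ∧
          Integrable (fun y => (starRingEnd ℂ) (u y) * (ψ y : ℂ)) (wMeasure w) ∧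
          ∫ y, (starRingEnd ℂ) (u y) * (ψ y : ℂ) ∂(wMeasure w) = 0 := by
      intro φ hφ hc
      have hφ' : ContDiff ℝ (⊤ : ℕ∞) fun y => (φ y : ℂ) := Complex.ofRealCLM.contDiff.comp hφ
      have hc' : HasCompactSupport fun y => (φ y : ℂ) := hc.comp_left Complex.ofReal_zero
      obtain ⟨x, hx⟩ := cls _ hφ' hc'
      have hT := haction x _ hφ' hc' hx
      refine ⟨_, rfl, ?_⟩
      have e : (fun y => inner ℂ (u y) ((T x + (x : Lp ℂ 2 (wMeasure w)) :
            Lp ℂ 2 (wMeasure w)) y)) =ᵐ[wMeasure w]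
          fun y => (starRingEnd ℂ) (u y) *
            ((LSub J φ y - ∑ j, (g j y / w y) * XD J j φ y + φ y : ℝ) : ℂ) := by
        filter_upwards [Lp.coeFn_add (T x) (x : Lp ℂ 2 (wMeasure w)), hT, hx] with y h1 h2 h3
        rw [h1, Pi.add_apply, h2, h3, RCLike.inner_apply, mul_comm, LSub_ofReal hφ]
        simp only [XD_ofReal _ hφ, Complex.real_smul]
        push_cast
        rfl
      refine ⟨(L2.integrable_inner u _).congr e, ?_⟩
      rw [← integral_congr_ae e, ← L2.inner_def, hu x]
    have hum := (Lp.stronglyMeasurable u).measurable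
    have hre : ∀ᵐ y ∂(wMeasure w), (u y).re = 0 := by
      refine hw.ae_eq_zero (Complex.measurable_re.comp hum) (Lp.memLp u).re fun φ hφ hc => ?_
      obtain ⟨ψ, hψ, hi, h0⟩ := key φ hφ hc
      have h := Complex.reCLM.integral_comp_comm hi
      rw [h0, map_zero] at h
      rw [← h]
      refine integral_congr_ae (Eventually.of_forall fun y => ?_)
      simp [hψ]
    have him : ∀ᵐ y ∂(wMeasure w), (u y).im = 0 := by
      refine hw.ae_eq_zero (Complex.measurable_im.comp hum) (Lp.memLp u).im fun φ hφ hc => ?_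
      obtain ⟨ψ, hψ, hi, h0⟩ := key φ hφ hc
      have h := Complex.imCLM.integral_comp_comm hi
      rw [h0, map_zero] at h
      rw [← neg_eq_zero, ← integral_neg, ← h]
      refine integral_congr_ae (Eventually.of_forall fun y => ?_)
      simp [hψ]
    rw [Lp.eq_zero_iff_ae_eq_zero]
    filter_upwards [hre, him] with y h1 h2
    exact Complex.ext h1 h2

end
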